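/- arXiv:2512.16942 — 2 statements merged into one kernel-verified Lean document; each statement's English description precedes it below -/
import Mathlib

section
/- Let q be a prime power with q ≡ 1 (mod 4) and 3 dividing q-1, and let n be the integer with n - 1 = (q-1)/3. If q > 2809, then not every element of F_q can be written as the sum of a 5-potent element and an n-potent element, i.e., C_5 + C_n ≠ F_q. -/
/-!
Let `χ` be a cubic character of `F` and `V` the group of fourth roots of unity, so that the
`n`-potents are `0` and the kernel of `χ`, and the `5`-potents are `0` and the elements of `V`. If
every element is a sum, then each `x ∉ {0} ∪ V` has `χ x = 1` or `χ (x - v) = 1` for some `v ∈ V`.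
Since `V` is closed under inversion and consists of cubes, the same statement for `x⁻¹` gives
`χ x = 1` or `χ ((x - v) * x ^ 2) = 1` for some `v ∈ V`. With `T = 2 Re χ`, which takes the values
`2` and `-1` on nonzero elements, both cases are captured by
`(2 - T x) * (1 + ∑ v ∈ V, T (x - v)) * (1 + ∑ v ∈ V, T ((x - v) * x ^ 2)) ≥ 0`.

Summed over `x`, the expansion of the left side has a negative main term proportional to `q`. The
other terms are Jacobi sums, which are `O(√q)`, and sums `∑ x, T ((x - a) * (x - b) * (x - e) ^ 2)`
with positive coefficients. Only an upper bound for the latter is needed, and Stepanov's method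
provides one: a nonzero polynomial that vanishes to order `3 * J + 2`, with `J` about `√q / 5`, at
every `x` where `(x - a) * (x - b) * (x - e) ^ 2` is a nonzero cube has too large a degree unless
there are few such `x`.
-/

open Polynomial Finset

section Stepanov

/-- `HasseMultiple r w G` says that multiplication by `w ^ ℓ` makes the `ℓ`-th Hasse derivative of
`G` a multiple of `G`, with a cofactor of degree at most `r * ℓ`. It stands for `G` being a product
of powers of linear factors of a polynomial `w` of degree `r + 1`. -/
def HasseMultiple {R : Type*} [CommRing R] (r : ℕ) (w G : R[X]) : Prop :=
  ∀ ℓ, ∃ E : R[X], E.natDegree ≤ r * ℓ ∧ w ^ ℓ * hasseDeriv ℓ G = G * E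

namespace HasseMultiple

variable {R : Type*} [CommRing R] {r : ℕ} {v w G H : R[X]}

theorem one (r : ℕ) (w : R[X]) : HasseMultiple r w 1 := by
  rintro (_ | ℓ)
  · exact ⟨1, by simp⟩
  · exact ⟨0, by simp [hasseDeriv_apply_one]⟩

theorem X_sub_C_mul (a : R) (hv : v.natDegree ≤ r) :
    HasseMultiple r ((X - C a) * v) (X - C a) := by
  rintro (_ | _ | ℓ)
  · exact ⟨1, by simp⟩
  · exact ⟨v, by simpa, by simp [hasseDeriv_one]⟩
  · exact ⟨0, by simp [hasseDeriv_X, hasseDeriv_C]⟩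

theorem mul (hG : HasseMultiple r w G) (hH : HasseMultiple r w H) :
    HasseMultiple r w (G * H) := by
  intro ℓ
  choose E hE hEG using hG
  choose E' hE' hEH using hH
  refine ⟨∑ ij ∈ antidiagonal ℓ, E ij.1 * E' ij.2, ?_, ?_⟩
  · refine natDegree_sum_le_of_forall_le _ _ fun ij hij => natDegree_mul_le.trans ?_
    rw [← mem_antidiagonal.1 hij, mul_add]
    exact add_le_add (hE _) (hE' _)
  · rw [hasseDeriv_mul, mul_sum, mul_sum]
    refine sum_congr rfl fun ij hij => ?_
    rw [← mem_antidiagonal.1 hij, pow_add]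
    linear_combination (w ^ ij.2 * hasseDeriv ij.2 H) * hEG ij.1 + G * E ij.1 * hEH ij.2

theorem pow (hG : HasseMultiple r w G) (n : ℕ) : HasseMultiple r w (G ^ n) := by
  induction n with
  | zero => simpa using one r w
  | succ n ih => exact pow_succ G n ▸ ih.mul hG

theorem exists_linearMap (hG : HasseMultiple r w G) (hw : w.natDegree ≤ r + 1) (ℓ : ℕ) :
    ∃ L : R[X] →ₗ[R] R[X], (∀ s, w ^ ℓ * hasseDeriv ℓ (G * s) = G * L s) ∧
      ∀ s, (L s).natDegree ≤ s.natDegree + r * ℓ := by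
  choose E hE hEG using hG
  let L : R[X] →ₗ[R] R[X] :=
    ∑ ij ∈ antidiagonal ℓ, LinearMap.mulLeft R (E ij.1 * w ^ ij.2) ∘ₗ hasseDeriv ij.2
  have hL (s) : L s = ∑ ij ∈ antidiagonal ℓ, E ij.1 * w ^ ij.2 * hasseDeriv ij.2 s := by
    simp [L, mul_assoc]
  refine ⟨L, fun s => ?_, fun s => ?_⟩
  · rw [hL, hasseDeriv_mul, mul_sum, mul_sum]
    refine sum_congr rfl fun ij hij => ?_
    rw [← mem_antidiagonal.1 hij, pow_add]
    linear_combination (w ^ ij.2 * hasseDeriv ij.2 s) * hEG ij.1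
  · rw [hL]
    refine natDegree_sum_le_of_forall_le _ _ fun ⟨i, j⟩ hij => ?_
    obtain hj | hj := lt_or_ge s.natDegree j
    · simp [hasseDeriv_eq_zero_of_lt_natDegree s j hj]
    calc (E i * w ^ j * hasseDeriv j s).natDegree
        ≤ r * i + j * (r + 1) + (s.natDegree - j) := by
          refine natDegree_mul_le_of_le (natDegree_mul_le_of_le (hE i) ?_)
            (natDegree_hasseDeriv_le s j)
          exact natDegree_pow_le_of_le j hw
      _ = s.natDegree + r * ℓ := by
          rw [← mem_antidiagonal.1 hij]
          zify [hj]
          ring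

end HasseMultiple

theorem linearMap_apply_mem_degreeLT_add {R : Type*} [Semiring R] {L : R[X] →ₗ[R] R[X]} {k : ℕ}
    (hL : ∀ s, (L s).natDegree ≤ s.natDegree + k) {D : ℕ} {s : R[X]} (hs : s ∈ degreeLT R D) :
    L s ∈ degreeLT R (D + k) := by
  obtain hLs | hLs := eq_or_ne (L s) 0
  · exact hLs ▸ zero_mem _
  have hs0 : s ≠ 0 := by
    rintro rfl
    exact hLs (map_zero L)
  rw [mem_degreeLT, ← natDegree_lt_iff_degree_lt hs0] at hs
  rw [mem_degreeLT, ← natDegree_lt_iff_degree_lt hLs]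
  exact (hL s).trans_lt (by gcongr)

theorem exists_ne_zero_forall_sum_eq_zero {F ι κ : Type*} [Field F] [Fintype ι] [Fintype κ]
    {D : ℕ} {N : κ → ℕ} (L : κ → ι → F[X] →ₗ[F] F[X])
    (hL : ∀ k i, ∀ s ∈ degreeLT F D, L k i s ∈ degreeLT F (N k))
    (hN : ∑ k, N k < Fintype.card ι * D) :
    ∃ u : ι → F[X], u ≠ 0 ∧ (∀ i, u i ∈ degreeLT F D) ∧ ∀ k, ∑ i, L k i (u i) = 0 := by
  have hfin (n : ℕ) : Module.finrank F (degreeLT F n) = n := by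
    simp [Module.finrank_eq_card_basis (degreeLT.basis F n)]
  let Λ : (ι → degreeLT F D) →ₗ[F] (k : κ) → degreeLT F (N k) :=
    LinearMap.pi fun k => ∑ i, (L k i).restrict (hL k i) ∘ₗ LinearMap.proj i
  have hΛ : LinearMap.ker Λ ≠ ⊥ := by
    apply LinearMap.ker_ne_bot_of_finrank_lt
    simpa [Module.finrank_pi_fintype, hfin] using hN
  obtain ⟨u, hu, hu0⟩ := (Submodule.ne_bot_iff _).1 hΛ
  refine ⟨fun i => u i, fun h => hu0 ?_, fun i => (u i).2, fun k => ?_⟩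
  · ext1 i
    exact Subtype.ext (congrFun h i)
  · simpa [Λ] using congrArg Subtype.val (congrFun hu k)

theorem sum_mul_ne_zero_of_natDegree_separated {R ι : Type*} [Semiring R] [NoZeroDivisors R]
    [Fintype ι] {D : ℕ} {b u : ι → R[X]} (hb : ∀ i, b i ≠ 0)
    (hsep : Pairwise fun i j => (b i).natDegree + D ≤ (b j).natDegree ∨
      (b j).natDegree + D ≤ (b i).natDegree)
    (hu : u ≠ 0) (hdeg : ∀ i, u i ∈ degreeLT R D) : ∑ i, b i * u i ≠ 0 := by
  have hdeg' {i : ι} (hi : b i * u i ≠ 0) :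
      (b i * u i).degree = ↑((b i).natDegree + (u i).natDegree) ∧ (u i).natDegree < D := by
    have hi' := right_ne_zero_of_mul hi
    rw [degree_eq_natDegree hi, natDegree_mul (hb i) hi', natDegree_lt_iff_degree_lt hi']
    exact ⟨rfl, mem_degreeLT.1 (hdeg i)⟩
  rw [← degree_ne_bot, degree_sum_eq_of_disjoint]
  · obtain ⟨i, hi⟩ := Function.ne_iff.1 hu
    refine ne_bot_of_le_ne_bot (degree_ne_bot.2 (mul_ne_zero (hb i) hi)) ?_
    exact le_sup (f := fun i => (b i * u i).degree) (mem_univ i)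
  · intro i hi j hj hij
    have := hsep hij
    obtain ⟨hi, hi'⟩ := hdeg' hi.2
    obtain ⟨hj, hj'⟩ := hdeg' hj.2
    simp only [Function.comp_apply, hi, hj, ne_eq, Nat.cast_inj]
    omega

theorem X_sub_C_pow_dvd_iff_eval_hasseDeriv {R : Type*} [CommRing R] {a : R} {p : R[X]} {n : ℕ} :
    (X - C a) ^ n ∣ p ↔ ∀ k < n, (hasseDeriv k p).eval a = 0 := by
  simp_rw [X_sub_C_pow_dvd_iff, X_pow_dvd_iff, ← taylor_coeff, taylor_apply]

theorem X_sub_C_pow_card {F : Type*} [Field F] [Fintype F] (x : F) :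
    (X - C x) ^ Fintype.card F = X ^ Fintype.card F - C x := by
  rw [← FiniteField.expand_card]
  simp

theorem mul_card_le_natDegree_of_forall_pow_dvd {K : Type*} [Field K] {p : K[X]} (hp : p ≠ 0)
    {T : Finset K} {M : ℕ} (hT : ∀ x ∈ T, (X - C x) ^ M ∣ p) : M * #T ≤ p.natDegree := by
  have hdvd : ∏ x ∈ T, (X - C x) ^ M ∣ p := by
    refine prod_dvd_of_coprime (fun x _ y _ hxy => ?_) hT
    exact (pairwise_coprime_X_sub_C Function.injective_id hxy).pow
  calc M * #T = (∏ x ∈ T, (X - C x) ^ M).natDegree := by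
        rw [natDegree_prod_of_monic _ _ fun x _ => (monic_X_sub_C x).pow M]
        simp [mul_comm]
    _ ≤ p.natDegree := natDegree_le_of_dvd hdvd hp

variable {F ι : Type*} [Field F] [Fintype F] [Fintype ι] {r D J M N : ℕ} {w : F[X]}
  {G : ι → F[X]} {j : ι → ℕ}

/- Modulo `(X - x) ^ q` the factor `X ^ (q * j i)` is the constant `x ^ j i`. -/
theorem pow_dvd_sum_mul_X_pow_card_mul_iff (hM : M ≤ Fintype.card F) (x : F) (f : ι → F[X]) :
    (X - C x) ^ M ∣ ∑ i, f i * X ^ (Fintype.card F * j i) ↔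
      (X - C x) ^ M ∣ ∑ i, x ^ j i • f i := by
  refine dvd_iff_dvd_of_dvd_sub ?_
  rw [← sum_sub_distrib]
  refine dvd_sum fun i _ => ?_
  rw [smul_eq_C_mul, mul_comm (C _), ← mul_sub, C_pow, pow_mul]
  refine Dvd.dvd.mul_left ((pow_dvd_pow _ hM).trans ?_) _
  exact X_sub_C_pow_card x ▸ sub_dvd_pow_sub_pow _ _ _

theorem exists_forall_pow_dvd_sum_of_hasseMultiple (hw : w.natDegree ≤ r + 1)
    (hG : ∀ i, HasseMultiple r w (G i)) (hj : ∀ i, j i ≤ J) (hM : M ≤ Fintype.card F)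
    (hD : ∑ ℓ ∈ range M, (D + (r * ℓ + J)) < Fintype.card ι * D) :
    ∃ u : ι → F[X], u ≠ 0 ∧ (∀ i, u i ∈ degreeLT F D) ∧
      ∀ x, w.eval x ≠ 0 → (∀ i, (G i).eval x = 1) →
        (X - C x) ^ M ∣ ∑ i, G i * u i * X ^ (Fintype.card F * j i) := by
  choose L hL hLdeg using fun i => (hG i).exists_linearMap hw
  have hLXdeg (ℓ : Fin M) (i : ι) (s : F[X]) :
      (L i ℓ s * X ^ j i).natDegree ≤ s.natDegree + (r * ℓ + J) :=
    calc (L i ℓ s * X ^ j i).natDegree ≤ s.natDegree + r * ℓ + j i :=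
          natDegree_mul_le_of_le (hLdeg i ℓ s) (natDegree_X_pow_le _)
      _ ≤ s.natDegree + (r * ℓ + J) := by linarith [hj i]
  obtain ⟨u, hu0, hu, hLu⟩ := exists_ne_zero_forall_sum_eq_zero
    (fun (ℓ : Fin M) i => LinearMap.mulRight F (X ^ j i) ∘ₗ L i ℓ)
    (fun ℓ i s hs => linearMap_apply_mem_degreeLT_add (hLXdeg ℓ i) hs)
    (by rwa [Fin.sum_univ_eq_sum_range fun ℓ => D + (r * ℓ + J)])
  refine ⟨u, hu0, hu, fun x hwx hGx => ?_⟩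
  rw [pow_dvd_sum_mul_X_pow_card_mul_iff hM, X_sub_C_pow_dvd_iff_eval_hasseDeriv]
  intro ℓ hℓ
  refine (mul_eq_zero.1 ?_).resolve_left (pow_ne_zero ℓ hwx)
  calc w.eval x ^ ℓ * (hasseDeriv ℓ (∑ i, x ^ j i • (G i * u i))).eval x
      = ∑ i, x ^ j i * (w ^ ℓ * hasseDeriv ℓ (G i * u i)).eval x := by
        simp [eval_finsetSum, mul_sum, mul_left_comm]
    _ = (∑ i, L i ℓ (u i) * X ^ j i).eval x := by
        simp [hL, hGx, eval_finsetSum, mul_comm]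
    _ = 0 := by simpa using congrArg (eval x) (hLu ⟨ℓ, hℓ⟩)

theorem mul_card_lt_of_hasseMultiple (hw : w.natDegree ≤ r + 1)
    (hG : ∀ i, HasseMultiple r w (G i)) (hG0 : ∀ i, G i ≠ 0) (hj : ∀ i, j i ≤ J)
    (hM : M ≤ Fintype.card F) (hD : ∑ ℓ ∈ range M, (D + (r * ℓ + J)) < Fintype.card ι * D)
    (hsep : Pairwise fun i i' =>
      (G i).natDegree + Fintype.card F * j i + D ≤ (G i').natDegree + Fintype.card F * j i' ∨
      (G i').natDegree + Fintype.card F * j i' + D ≤ (G i).natDegree + Fintype.card F * j i)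
    (hN : ∀ i, (G i).natDegree + Fintype.card F * j i + D ≤ N) {T : Finset F}
    (hT : ∀ x ∈ T, w.eval x ≠ 0 ∧ ∀ i, (G i).eval x = 1) : M * #T < N := by
  obtain ⟨u, hu0, hu, hdvd⟩ := exists_forall_pow_dvd_sum_of_hasseMultiple hw hG hj hM hD
  let b (i : ι) : F[X] := G i * X ^ (Fintype.card F * j i)
  have hb (i) : (b i).natDegree = (G i).natDegree + Fintype.card F * j i :=
    natDegree_mul_X_pow _ (hG0 i)
  have hsum : ∑ i, G i * u i * X ^ (Fintype.card F * j i) = ∑ i, b i * u i :=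
    sum_congr rfl fun i _ => mul_right_comm ..
  have hne : ∑ i, b i * u i ≠ 0 :=
    sum_mul_ne_zero_of_natDegree_separated (fun i => mul_ne_zero (hG0 i) (pow_ne_zero _ X_ne_zero))
      (by simpa only [hb]) hu0 hu
  have hmem : ∑ i, b i * u i ∈ degreeLT F N := by
    refine sum_mem fun i _ => degreeLT_mono ?_ <|
      linearMap_apply_mem_degreeLT_add (L := LinearMap.mulLeft F (b i)) (k := (b i).natDegree)
        (fun s => natDegree_mul_le.trans_eq (add_comm ..)) (hu i)
    rw [hb, add_comm]
    exact hN i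
  calc M * #T ≤ (∑ i, b i * u i).natDegree :=
        mul_card_le_natDegree_of_forall_pow_dvd hne fun x hx =>
          hsum ▸ hdvd x (hT x hx).1 (hT x hx).2
    _ < N := (natDegree_lt_iff_degree_lt hne).2 (mem_degreeLT.1 hmem)

/-- The power `((X - a) * (X - b) * (X - e) ^ 2) ^ (m * k)` with the exponent of each linear factor
reduced modulo `3 * m`. Over a field with `3 * m + 1` elements it takes the value `1` wherever
`((X - a) * (X - b) * (X - e) ^ 2) ^ m` does. -/
noncomputable def reducedPow {R : Type*} [CommRing R] (m : ℕ) (a b e : R) (k : ℕ) : R[X] :=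
  ((X - C a) * (X - C b)) ^ (m * (k % 3)) * (X - C e) ^ (m * (2 * k % 3))

section reducedPow

variable {R : Type*} [CommRing R] (m : ℕ) (a b e : R) (k : ℕ)

theorem monic_reducedPow : (reducedPow m a b e k).Monic :=
  (((monic_X_sub_C a).mul (monic_X_sub_C b)).pow _).mul ((monic_X_sub_C e).pow _)

theorem natDegree_reducedPow [Nontrivial R] :
    (reducedPow m a b e k).natDegree = m * (2 * (k % 3) + 2 * k % 3) := by
  have hab := (monic_X_sub_C a).mul (monic_X_sub_C b)
  rw [reducedPow, (hab.pow _).natDegree_mul ((monic_X_sub_C e).pow _), hab.natDegree_pow,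
    (monic_X_sub_C a).natDegree_mul (monic_X_sub_C b), (monic_X_sub_C e).natDegree_pow]
  simp only [natDegree_X_sub_C]
  ring

theorem hasseMultiple_reducedPow :
    HasseMultiple 2 ((X - C a) * (X - C b) * (X - C e)) (reducedPow m a b e k) := by
  have hdeg (c d : R) : ((X - C c) * (X - C d)).natDegree ≤ 2 :=
    natDegree_mul_le_of_le (natDegree_X_sub_C_le c) (natDegree_X_sub_C_le d)
  have ha := HasseMultiple.X_sub_C_mul a (hdeg b e)
  have hb := HasseMultiple.X_sub_C_mul b (hdeg a e)
  have he := HasseMultiple.X_sub_C_mul e (hdeg a b)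
  rw [← mul_assoc] at ha
  rw [mul_left_comm, ← mul_assoc] at hb
  rw [mul_comm] at he
  exact ((ha.mul hb).pow _).mul (he.pow _)

end reducedPow

theorem eval_reducedPow_eq_one {F : Type*} [Field F] [Fintype F] {m : ℕ}
    (hF : Fintype.card F = 3 * m + 1) {a b e x : F} (he : x ≠ e)
    (hx : ((x - a) * (x - b) * (x - e) ^ 2) ^ m = 1) (k : ℕ) :
    (reducedPow m a b e k).eval x = 1 := by
  have h3m : (x - e) ^ (3 * m) = 1 := by
    simpa [hF] using FiniteField.pow_card_sub_one_eq_one (x - e) (sub_ne_zero.2 he)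
  suffices ((x - a) * (x - b)) ^ (m * (k % 3)) * (x - e) ^ (m * (2 * k % 3)) = 1 by
    simpa [reducedPow] using this
  generalize (x - a) * (x - b) = y at hx ⊢
  generalize x - e = z at hx h3m ⊢
  rw [Nat.mul_mod, Nat.mod_eq_of_lt (show 2 < 3 by norm_num)]
  obtain hk | hk | hk : k % 3 = 0 ∨ k % 3 = 1 ∨ k % 3 = 2 := by omega
  · simp [hk]
  · rw [hk, ← hx]
    ring
  · calc y ^ (m * (k % 3)) * z ^ (m * (2 * (k % 3) % 3))
        = y ^ (m * 2) * z ^ m * z ^ (3 * m) := by simp [hk, h3m]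
      _ = ((y * z ^ 2) ^ m) ^ 2 := by ring
      _ = 1 := by rw [hx, one_pow]

/-- The degree of `reducedPow m a b e k * X ^ (q * j)`, where `q = 3 * m + 1` and `i = 3 * j + k`
with `k < 3`. -/
def stepanovDegree (m i : ℕ) : ℕ :=
  m * (2 * (i % 3) + 2 * i % 3) + (3 * m + 1) * (i / 3)

theorem exists_stepanovDegree_eq {m : ℕ} (hm : 0 < m) (i : ℕ) :
    ∃ s t, stepanovDegree m i = (3 * m + 1) * s + t ∧
      (i % 3 = 0 ∧ s = i / 3 ∧ t = 0 ∨ i % 3 = 1 ∧ s = i / 3 + 1 ∧ t = m - 1 ∨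
        i % 3 = 2 ∧ s = i / 3 + 1 ∧ t = 2 * m - 1) := by
  rw [stepanovDegree, Nat.mul_mod 2, Nat.mod_eq_of_lt (show 2 < 3 by norm_num)]
  obtain hi | hi | hi : i % 3 = 0 ∨ i % 3 = 1 ∨ i % 3 = 2 := by omega
  · exact ⟨i / 3, 0, by simp [hi], by simp [hi]⟩
  · refine ⟨i / 3 + 1, m - 1, ?_, by simp [hi]⟩
    rw [hi]
    zify [Nat.one_le_of_lt hm]
    ring
  · refine ⟨i / 3 + 1, 2 * m - 1, ?_, by simp [hi]⟩
    rw [hi]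
    zify [show 1 ≤ 2 * m by omega]
    ring

theorem stepanovDegree_separated {m i i' : ℕ} (hm : 0 < m) (hne : i ≠ i') :
    stepanovDegree m i + (m - 1) ≤ stepanovDegree m i' ∨
      stepanovDegree m i' + (m - 1) ≤ stepanovDegree m i := by
  obtain ⟨s, t, h, hst⟩ := exists_stepanovDegree_eq hm i
  obtain ⟨s', t', h', hst'⟩ := exists_stepanovDegree_eq hm i'
  rw [h, h']
  obtain hs | rfl | hs := lt_trichotomy s s'
  · have := Nat.mul_le_mul_left (3 * m + 1) (Nat.succ_le_of_lt hs)
    rw [Nat.mul_succ] at this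
    omega
  · omega
  · have := Nat.mul_le_mul_left (3 * m + 1) (Nat.succ_le_of_lt hs)
    rw [Nat.mul_succ] at this
    omega

theorem stepanovDegree_add_le {m i J : ℕ} (hm : 0 < m) (hi : i < 3 * J + 4) :
    stepanovDegree m i + (m - 1) ≤ (3 * m + 1) * (J + 2) := by
  obtain ⟨s, t, h, hst⟩ := exists_stepanovDegree_eq hm i
  have := Nat.mul_le_mul_left (3 * m + 1) (show s ≤ J + 1 by omega)
  rw [h, Nat.mul_succ]
  omega

theorem mul_card_filter_pow_eq_one_lt {F : Type*} [Field F] [Fintype F] [DecidableEq F] {m J : ℕ}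
    (hF : Fintype.card F = 3 * m + 1) (hJ : (3 * J + 2) * (4 * J + 2) < 2 * (m - 1))
    (a b e : F) :
    (3 * J + 2) * #{x : F | ((x - a) * (x - b) * (x - e) ^ 2) ^ m = 1} <
      Fintype.card F * (J + 2) := by
  have hm : 0 < m := by omega
  have hdeg (i : ℕ) : (reducedPow m a b e i).natDegree + Fintype.card F * (i / 3) =
      stepanovDegree m i := by
    rw [natDegree_reducedPow, hF, stepanovDegree]
  have hD : ∑ ℓ ∈ range (3 * J + 2), (m - 1 + (2 * ℓ + (J + 1))) <
      Fintype.card (Fin (3 * J + 4)) * (m - 1) := by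
    have hgauss : ∑ ℓ ∈ range (3 * J + 2), 2 * ℓ = (3 * J + 2) * (3 * J + 1) := by
      rw [← mul_sum, mul_comm, sum_range_id_mul_two, Nat.add_succ_sub_one]
    simp only [sum_add_distrib, hgauss, sum_const, card_range, smul_eq_mul, Fintype.card_fin]
    linarith
  refine mul_card_lt_of_hasseMultiple (G := fun i : Fin (3 * J + 4) => reducedPow m a b e i)
    (j := fun i => i / 3) ?_ (fun i => hasseMultiple_reducedPow m a b e i)
    (fun i => (monic_reducedPow m a b e i).ne_zero) (fun i => ?_) ?_ hD ?_ (fun i => ?_) ?_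
  · exact natDegree_mul_le_of_le (natDegree_mul_le_of_le (natDegree_X_sub_C_le a)
      (natDegree_X_sub_C_le b)) (natDegree_X_sub_C_le e)
  · omega
  · have : 2 * (3 * J + 2) ≤ (3 * J + 2) * (4 * J + 2) := by nlinarith
    omega
  · intro i i' hne
    simpa only [hdeg] using stepanovDegree_separated hm (Fin.val_ne_of_ne hne)
  · rw [hdeg, hF]
    exact stepanovDegree_add_le hm i.isLt
  · intro x hx
    replace hx : ((x - a) * (x - b) * (x - e) ^ 2) ^ m = 1 := (mem_filter.1 hx).2
    obtain ⟨⟨hxa, hxb⟩, hxe⟩ : (x - a ≠ 0 ∧ x - b ≠ 0) ∧ x - e ≠ 0 := by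
      have := (pow_ne_zero_iff hm.ne').1 (hx ▸ one_ne_zero)
      simpa only [mul_ne_zero_iff, pow_ne_zero_iff two_ne_zero] using this
    refine ⟨?_, fun i => eval_reducedPow_eq_one hF (sub_ne_zero.1 hxe) hx i⟩
    simpa using ⟨⟨hxa, hxb⟩, hxe⟩

end Stepanov

section CharacterSums

variable {F : Type*} [Field F]

/-- Twice the real part of `χ x`. For a cubic character `χ` this is the trace of `χ x` from
`ℚ(e ^ (2πi/3))` to `ℚ`. -/
noncomputable def charTrace (χ : MulChar F ℂ) (x : F) : ℝ :=
  2 * (χ x).re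

variable {χ : MulChar F ℂ}

theorem charTrace_eq_two {x : F} (hx : χ x = 1) : charTrace χ x = 2 := by
  simp [charTrace, hx]

theorem sum_charTrace {α : Type*} (s : Finset α) (χ : MulChar F ℂ) (f : α → F) :
    ∑ i ∈ s, charTrace χ (f i) = 2 * (∑ i ∈ s, χ (f i)).re := by
  simp [charTrace, mul_sum]

theorem abs_sum_charTrace_le {α : Type*} (s : Finset α) (χ : MulChar F ℂ) (f : α → F) :
    |∑ i ∈ s, charTrace χ (f i)| ≤ 2 * ‖∑ i ∈ s, χ (f i)‖ := by
  rw [sum_charTrace, abs_mul, abs_two]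
  gcongr
  exact Complex.abs_re_le_norm _

theorem mulChar_apply_pow_three (hχ : χ ^ 3 = 1) {x : F} (hx : x ≠ 0) : χ (x ^ 3) = 1 := by
  rw [map_pow, ← MulChar.pow_apply' χ three_ne_zero, hχ, MulChar.one_apply hx.isUnit]

theorem charTrace_mul_pow_three (hχ : χ ^ 3 = 1) (x : F) {y : F} (hy : y ≠ 0) :
    charTrace χ (x * y ^ 3) = charTrace χ x := by
  rw [charTrace, map_mul, mulChar_apply_pow_three hχ hy, mul_one, charTrace]

theorem norm_mulChar_of_pow_three_eq_one (hχ : χ ^ 3 = 1) {x : F} (hx : x ≠ 0) : ‖χ x‖ = 1 :=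
  Complex.norm_eq_one_of_pow_eq_one (by rw [← map_pow, mulChar_apply_pow_three hχ hx])
    three_ne_zero

theorem star_mulChar_of_pow_three_eq_one (hχ : χ ^ 3 = 1) (x : F) : star (χ x) = χ (x ^ 2) := by
  obtain rfl | hx := eq_or_ne x 0
  · simp [MulChar.map_zero]
  rw [Complex.star_def, ← Complex.inv_eq_conj (norm_mulChar_of_pow_three_eq_one hχ hx)]
  exact inv_eq_of_mul_eq_one_right (by rw [← map_mul, ← pow_succ', mulChar_apply_pow_three hχ hx])

theorem charTrace_sq (hχ : χ ^ 3 = 1) (x : F) : charTrace χ (x ^ 2) = charTrace χ x := by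
  rw [charTrace, ← star_mulChar_of_pow_three_eq_one hχ, Complex.star_def, Complex.conj_re,
    charTrace]

theorem charTrace_mul_charTrace (hχ : χ ^ 3 = 1) (x y : F) :
    charTrace χ x * charTrace χ y = charTrace χ (x * y) + charTrace χ (x * y ^ 2) := by
  simp only [charTrace, map_mul, ← star_mulChar_of_pow_three_eq_one hχ, Complex.star_def,
    Complex.mul_re, Complex.conj_re, Complex.conj_im]
  ring

theorem charTrace_eq_neg_one (hχ : χ ^ 3 = 1) {x : F} (hx : x ≠ 0) (h : χ x ≠ 1) :
    charTrace χ x = -1 := by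
  have h3 : χ x ^ 3 = 1 := by rw [← map_pow, mulChar_apply_pow_three hχ hx]
  have hsum : χ x + star (χ x) = -1 := by
    rw [star_mulChar_of_pow_three_eq_one hχ, map_pow]
    refine mul_left_cancel₀ (sub_ne_zero.2 h) ?_
    linear_combination h3
  have := congrArg Complex.re hsum
  simp only [Complex.star_def, Complex.add_re, Complex.conj_re, Complex.neg_re,
    Complex.one_re] at this
  rw [charTrace, two_mul, this]

theorem charTrace_mem_Icc (hχ : χ ^ 3 = 1) (x : F) : charTrace χ x ∈ Set.Icc (-1) 2 := by
  by_cases h : χ x = 1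
  · norm_num [charTrace_eq_two h]
  obtain rfl | hx := eq_or_ne x 0
  · norm_num [charTrace, MulChar.map_zero]
  · norm_num [charTrace_eq_neg_one hχ hx h]

theorem charTrace_mul_self (hχ : χ ^ 3 = 1) {x : F} (hx : x ≠ 0) :
    charTrace χ x * charTrace χ x = charTrace χ x + 2 := by
  by_cases h : χ x = 1
  · norm_num [charTrace_eq_two h]
  · norm_num [charTrace_eq_neg_one hχ hx h]

variable [Fintype F]

theorem sum_mulChar_sub_mul_mulChar_sub {R : Type*} [CommRing R] (χ ψ : MulChar F R) {a b : F}
    (hab : a ≠ b) :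
    ∑ x, χ (x - a) * ψ (x - b) = χ (b - a) * ψ (a - b) * jacobiSum χ ψ := by
  rw [jacobiSum, mul_sum]
  refine (Fintype.sum_equiv ((Equiv.mulLeft₀ (b - a) (sub_ne_zero.2 hab.symm)).trans
    (Equiv.addRight a)) _ _ fun u => ?_).symm
  rw [mul_mul_mul_comm, ← map_mul, ← map_mul]
  congr 2
  · simp
  · simp only [Equiv.trans_apply, Equiv.mulLeft₀_apply, Equiv.coe_addRight]
    ring

theorem norm_jacobiSum {χ ψ : MulChar F ℂ} (hχ : χ ≠ 1) (hψ : ψ ≠ 1) (hχψ : χ * ψ ≠ 1) :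
    ‖jacobiSum χ ψ‖ = √(Fintype.card F) := by
  have hchar : ringChar ℂ ≠ ringChar F := by
    rw [ringChar.eq ℂ 0]
    exact (CharP.ringChar_ne_zero_of_finite F).symm
  have hstar : jacobiSum χ⁻¹ ψ⁻¹ = star (jacobiSum χ ψ) := by
    simp only [jacobiSum, star_sum, star_mul', MulChar.star_apply']
  have h := congrArg norm (jacobiSum_mul_jacobiSum_inv hchar hχ hψ hχψ)
  rw [hstar, norm_mul, norm_star, Complex.norm_natCast] at h
  rw [← h, Real.sqrt_mul_self (norm_nonneg _)]

theorem sum_charTrace_eq_zero (hχ : χ ≠ 1) : ∑ x, charTrace χ x = 0 := by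
  rw [sum_charTrace, MulChar.sum_eq_zero_of_ne_one hχ, Complex.zero_re, mul_zero]

theorem sum_charTrace_sub_mul_sub_sq (h1 : χ ≠ 1) (hχ : χ ^ 3 = 1) {a b : F} (hab : a ≠ b) :
    ∑ x, charTrace χ ((x - a) * (x - b) ^ 2) = -2 := by
  have hsum : ∑ x, χ ((x - a) * (x - b) ^ 2) = -1 := by
    calc ∑ x, χ ((x - a) * (x - b) ^ 2) = ∑ x, χ (x - a) * χ⁻¹ (x - b) := by
          simp only [map_mul, ← star_mulChar_of_pow_three_eq_one hχ, MulChar.star_apply']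
      _ = χ (b - a) * χ⁻¹ (a - b) * -χ (-1) := by
          rw [sum_mulChar_sub_mul_mulChar_sub _ _ hab, jacobiSum_nontrivial_inv h1]
      _ = -1 := by
          rw [MulChar.inv_apply', mul_neg, ← map_mul, ← map_mul, ← neg_sub a b, neg_mul,
            mul_inv_cancel₀ (sub_ne_zero.2 hab), neg_mul_neg, one_mul, map_one]
  rw [sum_charTrace, hsum]
  simp

theorem norm_sum_mulChar_sub_mul_sub (h1 : χ ≠ 1) (hχ : χ ^ 3 = 1) {a b : F} (hab : a ≠ b) :
    ‖∑ x, χ ((x - a) * (x - b))‖ = √(Fintype.card F) := by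
  have h2 : χ * χ ≠ 1 := fun h => h1 (by rw [← hχ, pow_succ, sq, h, one_mul])
  simp only [map_mul]
  rw [sum_mulChar_sub_mul_mulChar_sub _ _ hab, norm_mul, norm_mul,
    norm_mulChar_of_pow_three_eq_one hχ (sub_ne_zero.2 hab),
    norm_mulChar_of_pow_three_eq_one hχ (sub_ne_zero.2 hab.symm),
    norm_jacobiSum h1 h1 h2, one_mul, one_mul]

theorem norm_sum_mulChar_sub_mul_sub_mul_sub_le (h1 : χ ≠ 1) (hχ : χ ^ 3 = 1) {a b c : F}
    (hab : a ≠ b) (hac : a ≠ c) (hbc : b ≠ c) :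
    ‖∑ x, χ ((x - a) * (x - b) * (x - c))‖ ≤ √(Fintype.card F) + 1 := by
  classical
  have ha := sub_ne_zero.2 hac
  have hb := sub_ne_zero.2 hbc
  have hinv (y : F) : χ ((y⁻¹ + c - a) * (y⁻¹ + c - b) * (y⁻¹ + c - c)) =
      χ ((a - c) * (b - c)) * χ ((y - (a - c)⁻¹) * (y - (b - c)⁻¹)) - if y = 0 then 1 else 0 := by
    rw [← map_mul]
    obtain rfl | hy := eq_or_ne y 0
    · field_simp
      simp [MulChar.map_zero]
    · rw [if_neg hy, sub_zero, ← mul_one (χ _), ← mulChar_apply_pow_three hχ hy, ← map_mul]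
      congr 1
      field_simp
      ring
  have hsum : ∑ x, χ ((x - a) * (x - b) * (x - c)) =
      χ ((a - c) * (b - c)) * ∑ y, χ ((y - (a - c)⁻¹) * (y - (b - c)⁻¹)) - 1 := by
    rw [← Equiv.sum_comp ((Equiv.inv F).trans (Equiv.addRight c))]
    simp only [Equiv.trans_apply, Equiv.inv_apply, Equiv.coe_addRight, hinv, sum_sub_distrib,
      sum_ite_eq', mem_univ, if_true, mul_sum]
  have hne : (a - c)⁻¹ ≠ (b - c)⁻¹ := by simpa using hab
  calc ‖∑ x, χ ((x - a) * (x - b) * (x - c))‖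
      ≤ ‖χ ((a - c) * (b - c)) * ∑ y, χ ((y - (a - c)⁻¹) * (y - (b - c)⁻¹))‖ +
          ‖(1 : ℂ)‖ := hsum ▸ norm_sub_le _ _
    _ = √(Fintype.card F) + 1 := by
        rw [norm_mul, norm_mulChar_of_pow_three_eq_one hχ (mul_ne_zero ha hb),
          norm_sum_mulChar_sub_mul_sub h1 hχ hne, one_mul, norm_one]

end CharacterSums

section CubicCovering

theorem card_offDiag_eq_mul_sub_one {α R : Type*} [Ring R] (s : Finset α) :
    (#s.offDiag : R) = #s * (#s - 1) := by
  classical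
  rw [offDiag_card, Nat.cast_sub (Nat.le_mul_self _), Nat.cast_mul, mul_sub, mul_one]

theorem mulChar_apply_eq_one_iff {F R : Type*} [Field F] [Fintype F] [CommRing R]
    {χ : MulChar F R} {m : ℕ} (hF : Fintype.card F = orderOf χ * m + 1) {x : F} (hx : x ≠ 0) :
    χ x = 1 ↔ x ^ m = 1 := by
  classical
  obtain ⟨g, hg⟩ := IsCyclic.exists_generator (α := Fˣ)
  obtain ⟨k, hk⟩ := mem_powers_iff_mem_zpowers.2 (hg (Units.mk0 x hx))
  obtain rfl : (g : F) ^ k = x := congrArg Units.val hk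
  have hχg : orderOf (χ g) = orderOf χ := by
    refine orderOf_eq_orderOf_iff.2 fun n => ?_
    rw [← MulChar.pow_apply_coe, MulChar.eq_iff hg, MulChar.one_apply_coe]
  have hcard : orderOf g = orderOf χ * m := by
    rw [orderOf_eq_card_of_forall_mem_zpowers hg, Nat.card_units, Nat.card_eq_fintype_card, hF,
      Nat.add_sub_cancel]
  have hm : 0 < m := (CanonicallyOrderedAdd.mul_pos.1 (hcard ▸ orderOf_pos g)).2
  rw [map_pow, ← pow_mul, ← orderOf_dvd_iff_pow_eq_one, ← orderOf_dvd_iff_pow_eq_one, hχg,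
    orderOf_units, hcard, Nat.mul_dvd_mul_iff_right hm]

variable {F : Type*} [Field F]

/-- The contribution to `coverForm` of an ordered pair of distinct elements `v`, `w`. -/
noncomputable def pairTerm (χ : MulChar F ℂ) (x v w : F) : ℝ :=
  2 * charTrace χ ((x - v) * (x - w) * x ^ 2) + charTrace χ ((x - v) * x * (x - w) ^ 2) -
    charTrace χ ((x - v) * (x - w)) - charTrace χ ((x - v) * (x - w) * x) -
    charTrace χ ((x - v) * (x - w) ^ 2)

/-- The expansion of `2 - charTrace χ x` times `1 + ∑ v ∈ V, charTrace χ (x - v)` times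
`1 + ∑ v ∈ V, charTrace χ ((x - v) * x ^ 2)`, for `x ∉ insert 0 V`. -/
noncomputable def coverForm (χ : MulChar F ℂ) (V : Finset F) (x : F) : ℝ :=
  (#V - 1) * (charTrace χ x - 2) + ∑ p ∈ V.offDiag, pairTerm χ x p.1 p.2

variable {χ : MulChar F ℂ}

theorem apply_eq_one_or_exists_apply_sub_mul_sq_eq_one [DecidableEq F] (hχ : χ ^ 3 = 1)
    {V : Finset F} (hV : ∀ v ∈ V, χ v = 1) (hinv : ∀ v ∈ V, v⁻¹ ∈ V)
    (hcover : ∀ x ∉ insert 0 V, χ x = 1 ∨ ∃ v ∈ V, χ (x - v) = 1) {x : F}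
    (hx : x ∉ insert 0 V) : χ x = 1 ∨ ∃ v ∈ V, χ ((x - v) * x ^ 2) = 1 := by
  obtain ⟨hx0, hxV⟩ : x ≠ 0 ∧ x ∉ V := by simpa using hx
  have hxinv : x⁻¹ ∉ insert 0 V := by
    simpa [hx0] using fun h => hxV (inv_inv x ▸ hinv _ h)
  obtain h | ⟨v, hv, h⟩ := hcover _ hxinv
  · left
    rw [← mul_one (χ x), ← h, ← map_mul, mul_inv_cancel₀ hx0, map_one, h]
  · right
    have hv0 : v ≠ 0 := by
      rintro rfl
      simpa [MulChar.map_zero] using hV 0 hv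
    refine ⟨v⁻¹, hinv v hv, ?_⟩
    calc χ ((x - v⁻¹) * x ^ 2) = χ ((x⁻¹ - v) * v⁻¹ * (-x) ^ 3) := by
          congr 1
          field_simp
          ring
      _ = 1 := by
          rw [map_mul, map_mul, h, hV _ (hinv v hv),
            mulChar_apply_pow_three hχ (neg_ne_zero.2 hx0), mul_one, mul_one]

theorem neg_nine_le_pairTerm (hχ : χ ^ 3 = 1) (x v w : F) : -9 ≤ pairTerm χ x v w := by
  have hT := charTrace_mem_Icc hχ
  rw [pairTerm]
  linarith [(hT ((x - v) * (x - w) * x ^ 2)).1, (hT ((x - v) * x * (x - w) ^ 2)).1,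
    (hT ((x - v) * (x - w))).2, (hT ((x - v) * (x - w) * x)).2, (hT ((x - v) * (x - w) ^ 2)).2]

theorem two_sub_charTrace_mul_charTrace_sub_mul (hχ : χ ^ 3 = 1) {x : F} (hx : x ≠ 0) (v w : F) :
    (2 - charTrace χ x) * (charTrace χ (x - v) * charTrace χ ((x - w) * x ^ 2)) =
      pairTerm χ x v w + charTrace χ ((x - v) * x * (x - w) ^ 2) -
        charTrace χ ((x - w) * x * (x - v) ^ 2) := by
  have hexpand : charTrace χ (x - v) * charTrace χ ((x - w) * x ^ 2) =
      charTrace χ ((x - v) * (x - w) * x ^ 2) + charTrace χ ((x - v) * x * (x - w) ^ 2) := by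
    rw [charTrace_mul_charTrace hχ, ← charTrace_mul_pow_three hχ ((x - v) * x * _) hx]
    ring_nf
  have hfst : charTrace χ ((x - v) * (x - w) * x ^ 2) * charTrace χ x =
      charTrace χ ((x - v) * (x - w)) + charTrace χ ((x - v) * (x - w) * x) := by
    rw [charTrace_mul_charTrace hχ, ← charTrace_mul_pow_three hχ ((x - v) * (x - w)) hx,
      ← charTrace_mul_pow_three hχ ((x - v) * (x - w) * x) hx]
    ring_nf
  have hsnd : charTrace χ ((x - v) * x * (x - w) ^ 2) * charTrace χ x =
      charTrace χ ((x - v) * (x - w) ^ 2) + charTrace χ ((x - w) * x * (x - v) ^ 2) := by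
    obtain rfl | hw := eq_or_ne x w
    · simp [charTrace, MulChar.map_zero]
    rw [charTrace_mul_charTrace hχ, ← charTrace_sq hχ ((x - v) * x * (x - w) ^ 2 * x),
      ← charTrace_mul_pow_three hχ ((x - v) * (x - w) ^ 2) hx,
      ← charTrace_mul_pow_three hχ ((x - w) * x * (x - v) ^ 2)
        (mul_ne_zero hx (sub_ne_zero.2 hw))]
    ring_nf
  rw [hexpand, pairTerm]
  linear_combination - hfst - hsnd

theorem sum_charTrace_sub_mul_charTrace_sub_mul (hχ : χ ^ 3 = 1) {V : Finset F}
    {x : F} (hx : x ≠ 0) (hxV : x ∉ V) :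
    (∑ v ∈ V, charTrace χ (x - v)) * ∑ v ∈ V, charTrace χ ((x - v) * x ^ 2) =
      ∑ p ∈ V.offDiag, charTrace χ (x - p.1) * charTrace χ ((x - p.2) * x ^ 2) +
        ∑ v ∈ V, charTrace χ ((x - v) * x) + #V * charTrace χ x := by
  have hdiag {v : F} (hv : v ∈ V) : charTrace χ (x - v) * charTrace χ ((x - v) * x ^ 2) =
      charTrace χ ((x - v) * x) + charTrace χ x := by
    have hvx : x - v ≠ 0 := sub_ne_zero.2 fun h => hxV (h ▸ hv)
    rw [charTrace_mul_charTrace hχ, ← charTrace_sq hχ ((x - v) * x),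
      ← charTrace_mul_pow_three hχ x (mul_ne_zero hvx hx)]
    ring_nf
  classical
  rw [sum_mul_sum, ← sum_product', ← diag_union_offDiag, sum_union (disjoint_diag_offDiag _),
    sum_diag, sum_congr rfl fun v hv => hdiag hv, sum_add_distrib, sum_const, nsmul_eq_mul]
  ring

/- With `t`, `A`, `B`, `C` the traces of `x`, `x - v`, `(x - v) * x ^ 2`, `(x - v) * x`, the last
three summed over `v`, multiplication by `t` sends `A`, `B`, `C` to `B + C`, `A + C`, `A + B`, so
`2 - t` annihilates `A + B + C`. -/
theorem two_sub_charTrace_mul_one_add_sum_mul_one_add_sum (hχ : χ ^ 3 = 1)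
    {V : Finset F} {x : F} (hx : x ≠ 0) (hxV : x ∉ V) :
    (2 - charTrace χ x) * ((1 + ∑ v ∈ V, charTrace χ (x - v)) *
        (1 + ∑ v ∈ V, charTrace χ ((x - v) * x ^ 2))) =
      coverForm χ V x := by
  have hA : (∑ v ∈ V, charTrace χ (x - v)) * charTrace χ x =
      ∑ v ∈ V, charTrace χ ((x - v) * x) + ∑ v ∈ V, charTrace χ ((x - v) * x ^ 2) := by
    simp only [sum_mul, charTrace_mul_charTrace hχ, sum_add_distrib]
  have hB : (∑ v ∈ V, charTrace χ ((x - v) * x ^ 2)) * charTrace χ x =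
      ∑ v ∈ V, charTrace χ (x - v) + ∑ v ∈ V, charTrace χ ((x - v) * x) := by
    rw [sum_mul, ← sum_add_distrib]
    refine sum_congr rfl fun v _ => ?_
    rw [charTrace_mul_charTrace hχ, ← charTrace_mul_pow_three hχ (x - v) hx,
      ← charTrace_mul_pow_three hχ ((x - v) * x) hx]
    ring_nf
  have hC : (∑ v ∈ V, charTrace χ ((x - v) * x)) * charTrace χ x =
      ∑ v ∈ V, charTrace χ ((x - v) * x ^ 2) + ∑ v ∈ V, charTrace χ (x - v) := by
    rw [sum_mul, ← sum_add_distrib]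
    refine sum_congr rfl fun v _ => ?_
    rw [charTrace_mul_charTrace hχ, ← charTrace_mul_pow_three hχ (x - v) hx]
    ring_nf
  have hoff : (2 - charTrace χ x) *
      ∑ p ∈ V.offDiag, charTrace χ (x - p.1) * charTrace χ ((x - p.2) * x ^ 2) =
        ∑ p ∈ V.offDiag, pairTerm χ x p.1 p.2 := by
    have hswap : ∑ p ∈ V.offDiag, charTrace χ ((x - p.2) * x * (x - p.1) ^ 2) =
        ∑ p ∈ V.offDiag, charTrace χ ((x - p.1) * x * (x - p.2) ^ 2) := by
      refine sum_equiv (Equiv.prodComm F F) (fun p => ?_) fun p _ => rfl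
      simp only [mem_offDiag, Equiv.prodComm_apply, Prod.fst_swap, Prod.snd_swap]
      tauto
    simp only [mul_sum, two_sub_charTrace_mul_charTrace_sub_mul hχ hx, sum_sub_distrib,
      sum_add_distrib, hswap, add_sub_cancel_right]
  have hAB := sum_charTrace_sub_mul_charTrace_sub_mul hχ hx hxV
  have ht := charTrace_mul_self hχ hx
  rw [coverForm]
  linear_combination (2 - charTrace χ x) * hAB + hoff - hA - hB - hC - #V * ht

theorem one_add_sum_charTrace_nonneg {ι : Type*} (hχ : χ ^ 3 = 1) {s : Finset ι} (hs : #s ≤ 4)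
    {f : ι → F} (h : ∃ i ∈ s, χ (f i) = 1) : 0 ≤ 1 + ∑ i ∈ s, charTrace χ (f i) := by
  classical
  obtain ⟨i, hi, hfi⟩ := h
  have hrest : #(s.erase i) • (-1 : ℝ) ≤ ∑ j ∈ s.erase i, charTrace χ (f j) :=
    card_nsmul_le_sum _ _ _ fun j _ => (charTrace_mem_Icc hχ (f j)).1
  have hcard : (#(s.erase i) : ℝ) ≤ 3 := by
    have := card_erase_of_mem hi
    exact_mod_cast (show #(s.erase i) ≤ 3 by omega)
  rw [← add_sum_erase s _ hi, charTrace_eq_two hfi]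
  rw [nsmul_eq_mul] at hrest
  linarith

theorem coverForm_nonneg [DecidableEq F] (hχ : χ ^ 3 = 1) {V : Finset F} (hV4 : #V ≤ 4)
    (hV : ∀ v ∈ V, χ v = 1) (hinv : ∀ v ∈ V, v⁻¹ ∈ V)
    (hcover : ∀ x ∉ insert 0 V, χ x = 1 ∨ ∃ v ∈ V, χ (x - v) = 1) {x : F}
    (hx : x ∉ insert 0 V) : 0 ≤ coverForm χ V x := by
  obtain ⟨hx0, hxV⟩ : x ≠ 0 ∧ x ∉ V := by simpa using hx
  rw [← two_sub_charTrace_mul_one_add_sum_mul_one_add_sum hχ hx0 hxV]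
  by_cases h : χ x = 1
  · simp [charTrace_eq_two h]
  refine mul_nonneg (sub_nonneg.2 (charTrace_mem_Icc hχ x).2) (mul_nonneg ?_ ?_)
  · exact one_add_sum_charTrace_nonneg hχ hV4 ((hcover x hx).resolve_left h)
  · exact one_add_sum_charTrace_nonneg hχ hV4
      ((apply_eq_one_or_exists_apply_sub_mul_sq_eq_one hχ hV hinv hcover hx).resolve_left h)

theorem neg_le_coverForm (hχ : χ ^ 3 = 1) {V : Finset F} (hV : 1 ≤ #V) (x : F) :
    -((#V - 1) * (9 * #V + 3)) ≤ coverForm χ V x := by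
  have hpair : #V.offDiag • (-9 : ℝ) ≤ ∑ p ∈ V.offDiag, pairTerm χ x p.1 p.2 :=
    card_nsmul_le_sum _ _ _ fun p _ => neg_nine_le_pairTerm hχ x p.1 p.2
  have hT := mul_le_mul_of_nonneg_left (charTrace_mem_Icc hχ x).1
    (sub_nonneg.2 (Nat.one_le_cast.2 hV) : (0 : ℝ) ≤ #V - 1)
  rw [nsmul_eq_mul, card_offDiag_eq_mul_sub_one] at hpair
  rw [coverForm]
  linarith

variable [Fintype F]

theorem sum_charTrace_quartic_le {m J : ℕ} (hF : Fintype.card F = 3 * m + 1)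
    (hJ : (3 * J + 2) * (4 * J + 2) < 2 * (m - 1)) (hχ : orderOf χ = 3) (a b e : F) :
    ∑ x, charTrace χ ((x - a) * (x - b) * (x - e) ^ 2) ≤
      4 * Fintype.card F / (3 * J + 2) + 3 := by
  classical
  have h3 : χ ^ 3 = 1 := hχ ▸ pow_orderOf_eq_one χ
  let f (x : F) : F := (x - a) * (x - b) * (x - e) ^ 2
  have hT (x : F) : charTrace χ (f x) ≤
      3 * (if f x ^ m = 1 then 1 else 0) - 1 + if x ∈ ({a, b, e} : Finset F) then 1 else 0 := by
    obtain hx | hx := eq_or_ne (f x) 0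
    · have hmem : x ∈ ({a, b, e} : Finset F) := by
        simpa [f, sub_eq_zero, or_assoc] using hx
      rw [hx, if_pos hmem, charTrace, MulChar.map_zero, Complex.zero_re]
      split_ifs <;> norm_num
    have hiff := mulChar_apply_eq_one_iff (hχ.symm ▸ hF) hx
    by_cases h : f x ^ m = 1
    · rw [charTrace_eq_two (hiff.2 h), if_pos h]
      split_ifs <;> norm_num
    · rw [charTrace_eq_neg_one h3 hx (mt hiff.1 h), if_neg h]
      split_ifs <;> norm_num
  have hsum : ∑ x, charTrace χ (f x) ≤
      3 * #{x | f x ^ m = 1} - Fintype.card F + #({a, b, e} : Finset F) := by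
    refine (sum_le_sum fun x _ => hT x).trans_eq ?_
    rw [sum_add_distrib, sum_sub_distrib, ← mul_sum, sum_boole, sum_boole, filter_univ_mem]
    simp
  have hcard : (#({a, b, e} : Finset F) : ℝ) ≤ 3 := by exact_mod_cast card_le_three
  have hstep : ((3 * J + 2) * #{x | f x ^ m = 1} : ℝ) < Fintype.card F * (J + 2) := by
    exact_mod_cast mul_card_filter_pow_eq_one_lt hF hJ a b e
  refine (hsum.trans (add_le_add_right hcard _)).trans (add_le_add_left ?_ _)
  rw [le_div_iff₀' (by positivity)]
  linarith

theorem sum_pairTerm_le (h1 : χ ≠ 1) (hχ : χ ^ 3 = 1) {B : ℝ}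
    (hB : ∀ a b e, ∑ x, charTrace χ ((x - a) * (x - b) * (x - e) ^ 2) ≤ B) {v w : F}
    (hv : v ≠ 0) (hw : w ≠ 0) (hvw : v ≠ w) :
    ∑ x, pairTerm χ x v w ≤ 3 * B + 4 * √(Fintype.card F) + 4 := by
  have hB1 := hB v w 0
  have hB2 := hB v 0 w
  have h2 := abs_sum_charTrace_le univ χ fun x => (x - v) * (x - w)
  have h3 := abs_sum_charTrace_le univ χ fun x => (x - v) * (x - w) * (x - 0)
  have h3' := norm_sum_mulChar_sub_mul_sub_mul_sub_le h1 hχ hvw hv hw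
  rw [norm_sum_mulChar_sub_mul_sub h1 hχ hvw] at h2
  simp only [sub_zero] at hB1 hB2 h3 h3'
  simp only [pairTerm, sum_sub_distrib, sum_add_distrib, ← mul_sum,
    sum_charTrace_sub_mul_sub_sq h1 hχ hvw]
  linarith [(abs_le.1 h2).1, (abs_le.1 h3).1]

theorem sum_coverForm_le (h1 : χ ≠ 1) (hχ : χ ^ 3 = 1) {V : Finset F}
    (hV : 0 ∉ V) {B : ℝ}
    (hB : ∀ a b e, ∑ x, charTrace χ ((x - a) * (x - b) * (x - e) ^ 2) ≤ B) :
    ∑ x, coverForm χ V x ≤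
      (#V - 1) * (#V * (3 * B + 4 * √(Fintype.card F) + 4) - 2 * Fintype.card F) := by
  have hV0 {v : F} (hv : v ∈ V) : v ≠ 0 := ne_of_mem_of_not_mem hv hV
  have hpairs : ∑ p ∈ V.offDiag, ∑ x, pairTerm χ x p.1 p.2 ≤
      #V.offDiag • (3 * B + 4 * √(Fintype.card F) + 4) := by
    refine sum_le_card_nsmul _ _ _ fun p hp => ?_
    obtain ⟨hp1, hp2, hne⟩ := mem_offDiag.1 hp
    exact sum_pairTerm_le h1 hχ hB (hV0 hp1) (hV0 hp2) hne
  rw [nsmul_eq_mul, card_offDiag_eq_mul_sub_one] at hpairs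
  simp only [coverForm]
  rw [sum_add_distrib, sum_comm, ← mul_sum, sum_sub_distrib, sum_charTrace_eq_zero h1, sum_const,
    nsmul_eq_mul, card_univ]
  linarith

theorem two_mul_card_le_of_cover [DecidableEq F] (h1 : χ ≠ 1) (hχ : χ ^ 3 = 1) {V : Finset F}
    (hV1 : 1 < #V) (hV4 : #V ≤ 4) (hV : ∀ v ∈ V, χ v = 1) (hinv : ∀ v ∈ V, v⁻¹ ∈ V)
    (hcover : ∀ x ∉ insert 0 V, χ x = 1 ∨ ∃ v ∈ V, χ (x - v) = 1) {B : ℝ}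
    (hB : ∀ a b e, ∑ x, charTrace χ ((x - a) * (x - b) * (x - e) ^ 2) ≤ B) :
    2 * (Fintype.card F : ℝ) ≤
      #V * (3 * B + 4 * √(Fintype.card F) + 4) + (#V + 1) * (9 * #V + 3) := by
  have hV0 : 0 ∉ V := fun h => by simpa [MulChar.map_zero] using hV 0 h
  have hlower : #(insert 0 V) • -((#V - 1 : ℝ) * (9 * #V + 3)) ≤ ∑ x, coverForm χ V x :=
    (card_nsmul_le_sum _ _ _ fun x _ => neg_le_coverForm hχ hV1.le x).trans <|
      sum_le_sum_of_subset_of_nonneg (subset_univ _) fun x _ hx =>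
        coverForm_nonneg hχ hV4 hV hinv hcover hx
  have hupper := sum_coverForm_le h1 hχ hV0 hB
  rw [card_insert_of_notMem hV0, nsmul_eq_mul] at hlower
  push_cast at hlower
  have hpos : (0 : ℝ) < #V - 1 := sub_pos.2 (Nat.one_lt_cast.2 hV1)
  refine le_of_mul_le_mul_left ?_ hpos
  linarith

end CubicCovering

theorem exists_stepanov_parameter {q m : ℕ} (hqm : q = 3 * m + 1) (hq : 2809 < q) :
    ∃ J : ℕ, (3 * J + 2) * (4 * J + 2) < 2 * (m - 1) ∧
      12 * (4 * q / (3 * J + 2) + 3) + 16 * √q + 211 < (2 * q : ℝ) := by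
  obtain ⟨s, hs⟩ : ∃ s : ℝ, s = √q := ⟨_, rfl⟩
  have hs2 : s ^ 2 = q := hs ▸ Real.sq_sqrt q.cast_nonneg
  have hs53 : 53 < s := by
    rw [hs]
    exact Real.lt_sqrt_of_sq_lt (by norm_num; exact_mod_cast hq)
  obtain ⟨J, hJs, hsJ⟩ : ∃ J : ℕ, J ≤ s / 5 ∧ s / 5 < J + 1 :=
    ⟨⌊s / 5⌋₊, Nat.floor_le (by linarith), Nat.lt_floor_add_one _⟩
  have hqm' : (q : ℝ) = 3 * m + 1 := by exact_mod_cast hqm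
  refine ⟨J, ?_, ?_⟩
  · have hJ2 : (J : ℝ) ^ 2 ≤ (s / 5) ^ 2 := by gcongr
    have hreal : ((3 * J + 2) * (4 * J + 2) : ℝ) < 2 * (m - 1) := by nlinarith
    rw [← Nat.cast_lt (α := ℝ)]
    push_cast [Nat.cast_sub (show 1 ≤ m by omega)]
    exact hreal
  · have hM : 0.6 * s - 1 < 3 * (J : ℝ) + 2 := by linarith
    have hpos : 0 < 2 * s ^ 2 - 16 * s - 247 := by nlinarith
    have hcubic : 48 * s ^ 2 < (0.6 * s - 1) * (2 * s ^ 2 - 16 * s - 247) := by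
      nlinarith [pow_pos (sub_pos.2 hs53) 2, pow_pos (sub_pos.2 hs53) 3]
    have hdiv : 48 * s ^ 2 / (3 * (J : ℝ) + 2) < 2 * s ^ 2 - 16 * s - 247 := by
      rw [div_lt_iff₀' (by positivity)]
      exact hcubic.trans (mul_lt_mul_of_pos_right hM hpos)
    rw [← hs, ← hs2]
    linarith [show 12 * (4 * s ^ 2 / (3 * J + 2)) = 48 * s ^ 2 / (3 * (J : ℝ) + 2) by ring]

section Covering

theorem pow_succ_eq_self_iff {M : Type*} [MonoidWithZero M] [IsRightCancelMulZero M] {a : M}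
    {n : ℕ} : a ^ (n + 1) = a ↔ a = 0 ∨ a ^ n = 1 := by
  rw [pow_succ, mul_left_eq_self₀, or_comm]

theorem card_nthRootsFinset_le {R : Type*} [CommRing R] [IsDomain R] (n : ℕ) (a : R) :
    #(nthRootsFinset n a) ≤ n := by
  classical
  rw [nthRootsFinset_def]
  exact (Multiset.toFinset_card_le _).trans (card_nthRoots n a)

variable {F : Type*} [Field F] [Fintype F] [DecidableEq F]

theorem not_forall_exists_add_of_card_le_one {m : ℕ} (hF : Fintype.card F = 3 * m + 1)
    (hm : 1 < m) {V : Finset F} (hV : #V ≤ 1) :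
    ¬ ∀ γ : F, ∃ a ∈ insert 0 V, ∃ b, b ^ (m + 1) = b ∧ a + b = γ := by
  intro h
  have hV2 : #(insert 0 V) ≤ 2 := (card_insert_le _ _).trans (by omega)
  have hroots : #(insert 0 (nthRootsFinset m (1 : F))) ≤ m + 1 :=
    (card_insert_le _ _).trans (Nat.succ_le_succ (card_nthRootsFinset_le m 1))
  have hsum : univ ⊆ image₂ (· + ·) (insert 0 V) (insert 0 (nthRootsFinset m (1 : F))) := by
    intro γ _
    obtain ⟨a, ha, b, hb, rfl⟩ := h γ
    refine mem_image₂_of_mem ha ?_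
    rwa [mem_insert, mem_nthRootsFinset (by omega), ← pow_succ_eq_self_iff]
  have := (card_le_card hsum).trans ((card_image₂_le _ _ _).trans (Nat.mul_le_mul hV2 hroots))
  rw [card_univ, hF] at this
  omega

theorem apply_eq_one_or_exists_apply_sub_eq_one {R : Type*} [CommRing R] {χ : MulChar F R} {m : ℕ}
    (hF : Fintype.card F = orderOf χ * m + 1) {V : Finset F} {x : F}
    (h : ∃ a ∈ insert 0 V, ∃ b, b ^ (m + 1) = b ∧ a + b = x) (hx : x ∉ insert 0 V) :
    χ x = 1 ∨ ∃ v ∈ V, χ (x - v) = 1 := by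
  obtain ⟨a, ha, b, hb, rfl⟩ := h
  have hb0 : b ≠ 0 := by
    rintro rfl
    exact hx (by rwa [add_zero])
  have hχb : χ b = 1 :=
    (mulChar_apply_eq_one_iff hF hb0).2 ((pow_succ_eq_self_iff.1 hb).resolve_left hb0)
  obtain rfl | ha := mem_insert.1 ha
  · exact .inl (by rwa [zero_add])
  · exact .inr ⟨a, ha, by rwa [add_sub_cancel_left]⟩

theorem not_forall_exists_add_of_card_le_four {m : ℕ} (hF : Fintype.card F = 3 * m + 1)
    (hq : 2809 < Fintype.card F) {V : Finset F} (hV4 : #V ≤ 4) (hV : ∀ v ∈ V, v ^ m = 1)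
    (hinv : ∀ v ∈ V, v⁻¹ ∈ V) :
    ¬ ∀ γ : F, ∃ a ∈ insert 0 V, ∃ b, b ^ (m + 1) = b ∧ a + b = γ := by
  obtain hV1 | hV1 := le_or_gt #V 1
  · exact not_forall_exists_add_of_card_le_one hF (by omega) hV1
  intro h
  obtain ⟨χ, hχ⟩ : ∃ χ : MulChar F ℂ, orderOf χ = 3 :=
    MulChar.exists_mulChar_orderOf F (by simp [hF]) (Complex.isPrimitiveRoot_exp 3 three_ne_zero)
  have hχ1 : χ ≠ 1 := by
    rintro rfl
    simp at hχ
  have hχ_iff {x : F} (hx : x ≠ 0) : χ x = 1 ↔ x ^ m = 1 :=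
    mulChar_apply_eq_one_iff (hχ.symm ▸ hF) hx
  have hV0 {v : F} (hv : v ∈ V) : v ≠ 0 := by
    rintro rfl
    simpa [show m ≠ 0 by omega] using hV 0 hv
  have hcover (x) (hx : x ∉ insert 0 V) : χ x = 1 ∨ ∃ v ∈ V, χ (x - v) = 1 :=
    apply_eq_one_or_exists_apply_sub_eq_one (hχ.symm ▸ hF) (h x) hx
  obtain ⟨J, hJ, hlt⟩ := exists_stepanov_parameter hF hq
  have hle := two_mul_card_le_of_cover hχ1 (hχ ▸ pow_orderOf_eq_one χ) hV1 hV4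
    (fun v hv => (hχ_iff (hV0 hv)).2 (hV v hv)) hinv hcover (sum_charTrace_quartic_le hF hJ hχ)
  have hV4' : (#V : ℝ) ≤ 4 := by exact_mod_cast hV4
  have hbound : (0 : ℝ) ≤ 4 * Fintype.card F / (3 * J + 2) := by positivity
  refine hle.not_gt (lt_of_le_of_lt ?_ hlt)
  calc #V * (3 * (4 * Fintype.card F / (3 * J + 2) + 3) + 4 * √(Fintype.card F) + 4) +
        (#V + 1) * (9 * #V + 3)
      ≤ 4 * (3 * (4 * Fintype.card F / (3 * J + 2) + 3) + 4 * √(Fintype.card F) + 4) +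
        (4 + 1) * (9 * 4 + 3) := by gcongr
    _ = 12 * (4 * Fintype.card F / (3 * J + 2) + 3) + 16 * √(Fintype.card F) + 211 := by ring

end Covering

theorem not_sum_of_five_potent_and_n_potent_d_eq_three_general {F : Type*} [Field F] [Fintype F]
    {m : ℕ} (hF : Fintype.card F = 3 * m + 1) (hq : 2809 < Fintype.card F) :
    ¬ ∀ γ : F, ∃ a b : F, a ^ 5 = a ∧ b ^ (m + 1) = b ∧ a + b = γ := by
  classical
  have hmem {v : F} : v ∈ nthRootsFinset 4 (1 : F) ↔ v ^ 4 = 1 := mem_nthRootsFinset four_pos 1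
  have hpow (v : F) (hv : v ∈ nthRootsFinset 4 1) : v ^ m = 1 := by
    have hv4 := hmem.1 hv
    have hv0 : v ≠ 0 := (IsUnit.of_pow_eq_one hv4 four_ne_zero).ne_zero
    have hv3 : v ^ (3 * m) = 1 := by
      simpa [hF] using FiniteField.pow_card_sub_one_eq_one v hv0
    calc v ^ m = v ^ m * v ^ (3 * m) := by rw [hv3, mul_one]
      _ = (v ^ 4) ^ m := by ring
      _ = 1 := by rw [hv4, one_pow]
  have hinv (v : F) (hv : v ∈ nthRootsFinset 4 1) : v⁻¹ ∈ nthRootsFinset 4 (1 : F) := by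
    rw [hmem, inv_pow, hmem.1 hv, inv_one]
  intro h
  refine not_forall_exists_add_of_card_le_four hF hq (card_nthRootsFinset_le 4 1) hpow hinv
    fun γ => ?_
  obtain ⟨a, b, ha, hb, hab⟩ := h γ
  exact ⟨a, by rwa [mem_insert, hmem, ← pow_succ_eq_self_iff], b, hb, hab⟩

/-- If `q ≡ 1 (mod 4)` is a prime power with `q > 2809`, `3 ∣ q - 1`, and `n - 1 = (q-1)/3`,
then not every element of the finite field with `q` elements is the sum of a `5`-potent
and an `n`-potent. -/
theorem not_sum_of_five_potent_and_n_potent_d_eq_three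
    (q n : ℕ) (hq : IsPrimePow q) (hq4 : q % 4 = 1) (h3 : 3 ∣ q - 1) (hq' : 2809 < q)
    (hn : n = (q - 1) / 3 + 1)
    (F : Type*) [Field F] [Fintype F] (hF : Fintype.card F = q) :
    ¬ (∀ γ : F, ∃ a b : F, a ^ 5 = a ∧ b ^ n = b ∧ a + b = γ) := by
  subst hF hn
  exact not_sum_of_five_potent_and_n_potent_d_eq_three_general (by omega) hq'
end

section
/- Let q be a prime power with q ≡ 1 (mod 4) and let n be the integer with n - 1 = (q-1)/4. If q > 2809, then not every element of F_q can be written as the sum of a 5-potent element and an n-potent element, i.e., C_5 + C_n ≠ F_q. -/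
/-!
An `n`-potent with `n - 1 = (q - 1) / 4` is a fourth power, so if `C_5 + C_n = F_q`, then every
element has the form `a + d ^ 4` with `a ^ 5 = a`. Let `χ` be the quadratic character. Applying the
covering property also after scaling or inverting `x`, one finds an exponent `m ∈ {1, 2}` such that,
for all but a few `x = y ^ m` with `y` a nonsquare, at least two of the four shifts `x - v` with
`v ^ 4 = 1` are squares. The product of the four shifts is `x ^ 4 - 1`, and four signs two of which
are `1` have sum plus product at least `1`. Hence the average of `∑ v, χ (x - v) + χ (x ^ 4 - 1)`
over the nonsquares `y` is not much smaller than `1`.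

On the other hand, `|∑ y, ψ y * χ (y ^ n - v)| ≤ n * √q` for `v ≠ 0` and `ψ ∈ {1, χ}`, so that this
average is of order `1 / √q`. This bound does not need Weil's theorem: the second moment of the
sum over all `v` is computed exactly from `∑ t, χ (a - t) * χ (b - t)`, and replacing `y` by `s * y`
shows that the sum has the same absolute value at `v` and at all `s ^ n * v`.
-/

section IntegerValuedCharacters

theorem mulChar_int_inv {M : Type*} [CommMonoid M] (χ : MulChar M ℤ) : χ⁻¹ = χ :=
  inv_eq_of_mul_eq_one_left <| MulChar.ext fun x => by
    rw [MulChar.mul_apply, ← sq, Int.isUnit_sq (x.isUnit.map χ), MulChar.one_apply_coe]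

variable {G : Type*} [CommGroupWithZero G]

theorem mulChar_int_eq_one_or_neg_one (χ : MulChar G ℤ) {x : G} (hx : x ≠ 0) :
    χ x = 1 ∨ χ x = -1 :=
  Int.isUnit_iff.mp ((IsUnit.mk0 x hx).map χ)

theorem mulChar_int_sq_eq_one (χ : MulChar G ℤ) {x : G} (hx : x ≠ 0) : χ x ^ 2 = 1 :=
  Int.isUnit_sq ((IsUnit.mk0 x hx).map χ)

theorem mulChar_int_mul_le_sq (χ : MulChar G ℤ) (x y : G) : χ x * χ y ≤ χ x ^ 2 := by
  rcases eq_or_ne x 0 with rfl | hx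
  · simp [MulChar.map_zero]
  rcases eq_or_ne y 0 with rfl | hy
  · simpa [MulChar.map_zero] using sq_nonneg (χ x)
  · linarith [sq_nonneg (χ x - χ y), mulChar_int_sq_eq_one χ hx, mulChar_int_sq_eq_one χ hy]

theorem neg_one_le_mulChar_int (χ : MulChar G ℤ) (x : G) : -1 ≤ χ x := by
  rcases eq_or_ne x 0 with rfl | hx
  · simp [MulChar.map_zero]
  · rcases mulChar_int_eq_one_or_neg_one χ hx with h | h <;> simp [h]

theorem sum_mulChar_int_sq [Fintype G] (χ : MulChar G ℤ) : ∑ x, χ x ^ 2 = Fintype.card G - 1 := by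
  classical
  have hsq (x : G) : χ x ^ 2 = 1 - if x = 0 then 1 else 0 := by
    split_ifs with hx
    · simp [hx, MulChar.map_zero]
    · rw [mulChar_int_sq_eq_one χ hx, sub_zero]
  simp [hsq]

end IntegerValuedCharacters

section PowerFibres

variable {R : Type*} [CommRing R] [IsDomain R] [Fintype R]

theorem card_filter_pow_eq_le [DecidableEq R] {n : ℕ} (hn : n ≠ 0) (c : R) :
    ({x | x ^ n = c} : Finset R).card ≤ n := by
  have hsub : ({x | x ^ n = c} : Finset R) ⊆ (Polynomial.nthRoots n c).toFinset := fun x hx => by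
    simpa [Polynomial.mem_nthRoots (Nat.pos_of_ne_zero hn)] using hx
  exact (Finset.card_le_card hsub).trans
    ((Multiset.toFinset_card_le _).trans (Polynomial.card_nthRoots n c))

theorem sum_comp_pow_le {n : ℕ} (hn : n ≠ 0) {M : Type*} [Semiring M]
    [PartialOrder M] [IsOrderedRing M] {g : R → M} (hg : ∀ t, 0 ≤ g t) :
    ∑ x, g (x ^ n) ≤ n * ∑ t, g t := by
  classical
  rw [← Finset.sum_fiberwise _ (· ^ n), Finset.mul_sum]
  refine Finset.sum_le_sum fun c _ => ?_
  calc ∑ x with x ^ n = c, g (x ^ n) = ({x | x ^ n = c} : Finset R).card * g c := by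
        rw [Finset.sum_congr rfl fun x hx => by rw [(Finset.mem_filter.mp hx).2],
          Finset.sum_const, nsmul_eq_mul]
    _ ≤ n * g c := by
        gcongr
        · exact hg c
        · exact card_filter_pow_eq_le hn c

end PowerFibres

section CharacterSums

variable {F : Type*} [Field F] [Fintype F]

theorem sum_mulChar_sub_mul_mulChar_sub_s7 [DecidableEq F] {χ : MulChar F ℤ} (hχ : χ ≠ 1) (a b : F) :
    ∑ t, χ (a - t) * χ (b - t) = (if a = b then (Fintype.card F : ℤ) else 0) - 1 := by
  rcases eq_or_ne a b with rfl | hab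
  · simp only [← sq, if_true, ← sum_mulChar_int_sq χ]
    exact Equiv.sum_comp (Equiv.subLeft a) fun x => χ x ^ 2
  · have hab' : a - b ≠ 0 := sub_ne_zero.mpr hab
    have hterm (x : F) : χ (a - (a - (a - b) * x)) * χ (b - (a - (a - b) * x)) =
        χ (-1) * (χ x * χ (1 - x)) := by
      rw [show a - (a - (a - b) * x) = (a - b) * x by ring,
        show b - (a - (a - b) * x) = -1 * ((a - b) * (1 - x)) by ring]
      simp only [map_mul]
      linear_combination χ (-1) * χ x * χ (1 - x) * mulChar_int_sq_eq_one χ hab'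
    have hjacobi : ∑ x, χ x * χ (1 - x) = -χ (-1) := by
      simpa only [jacobiSum, mulChar_int_inv] using jacobiSum_nontrivial_inv hχ
    rw [← Equiv.sum_comp ((Equiv.mulLeft₀ (a - b) hab').trans (Equiv.subLeft a))
      fun t => χ (a - t) * χ (b - t)]
    simp only [Equiv.trans_apply, Equiv.mulLeft₀_apply, Equiv.subLeft_apply, hterm,
      ← Finset.mul_sum, hjacobi, if_neg hab]
    linear_combination -mulChar_int_sq_eq_one χ (neg_ne_zero.mpr one_ne_zero)

theorem sum_sq_sum_mul_mulChar_sub [DecidableEq F] {ι : Type*} [Fintype ι] {χ : MulChar F ℤ}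
    (hχ : χ ≠ 1) (f : ι → ℤ) (h : ι → F) :
    ∑ t, (∑ i, f i * χ (h i - t)) ^ 2 =
      Fintype.card F * ∑ i, ∑ j, (if h i = h j then f i * f j else 0) - (∑ i, f i) ^ 2 := by
  calc ∑ t, (∑ i, f i * χ (h i - t)) ^ 2
      = ∑ i, ∑ j, f i * f j * ∑ t, χ (h i - t) * χ (h j - t) := by
        simp_rw [sq, Finset.sum_mul_sum, Finset.mul_sum]
        rw [Finset.sum_comm]
        refine Finset.sum_congr rfl fun i _ => ?_
        rw [Finset.sum_comm]
        exact Finset.sum_congr rfl fun j _ => Finset.sum_congr rfl fun t _ => by ring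
    _ = _ := by
        simp_rw [sum_mulChar_sub_mul_mulChar_sub_s7 hχ, sq, Finset.sum_mul_sum, Finset.mul_sum,
          ← Finset.sum_sub_distrib]
        refine Finset.sum_congr rfl fun i _ => Finset.sum_congr rfl fun j _ => ?_
        split_ifs <;> ring

theorem sum_mul_mulChar_pow_sub_scale (χ ψ : MulChar F ℤ) (n : ℕ) {s : F} (hs : s ≠ 0) (v : F) :
    ∑ x, ψ x * χ (x ^ n - s ^ n * v) = ψ s * χ s ^ n * ∑ x, ψ x * χ (x ^ n - v) := by
  rw [← Equiv.sum_comp (Equiv.mulLeft₀ s hs), Finset.mul_sum]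
  refine Finset.sum_congr rfl fun x _ => ?_
  rw [Equiv.mulLeft₀_apply, mul_pow, ← mul_sub]
  simp only [map_mul, map_pow]
  ring

theorem sum_sq_sum_mul_mulChar_pow_sub_le {χ : MulChar F ℤ} (hχ : χ ≠ 1) (ψ : MulChar F ℤ)
    {n : ℕ} (hn : n ≠ 0) :
    ∑ t, (∑ x, ψ x * χ (x ^ n - t)) ^ 2 ≤ Fintype.card F * (n * (Fintype.card F - 1)) := by
  classical
  have hfibre (x : F) : ∑ y, (if x ^ n = y ^ n then ψ x * ψ y else 0) ≤ n * ψ x ^ 2 := by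
    calc ∑ y, (if x ^ n = y ^ n then ψ x * ψ y else 0)
        = ∑ y with y ^ n = x ^ n, ψ x * ψ y := by simp only [Finset.sum_filter, eq_comm]
      _ ≤ ({y | y ^ n = x ^ n} : Finset F).card • ψ x ^ 2 :=
        Finset.sum_le_card_nsmul _ _ _ fun y _ => mulChar_int_mul_le_sq ψ x y
      _ ≤ n * ψ x ^ 2 := by
        rw [nsmul_eq_mul]
        gcongr
        exact card_filter_pow_eq_le hn _
  rw [sum_sq_sum_mul_mulChar_sub hχ, ← sum_mulChar_int_sq ψ, Finset.mul_sum (a := (n : ℤ))]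
  refine (sub_le_self _ (sq_nonneg _)).trans ?_
  gcongr with x
  exact hfibre x

theorem sq_sum_mul_mulChar_pow_sub_le {χ : MulChar F ℤ} (hχ : χ ≠ 1) (ψ : MulChar F ℤ)
    {n : ℕ} (hn : n ≠ 0) {v : F} (hv : v ≠ 0) :
    (∑ x, ψ x * χ (x ^ n - v)) ^ 2 ≤ n ^ 2 * Fintype.card F := by
  set S : F → ℤ := fun t => ∑ x, ψ x * χ (x ^ n - t) with hS
  have hscale (s : F) : ψ s ^ 2 * S v ^ 2 ≤ S (s ^ n * v) ^ 2 := by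
    rcases eq_or_ne s 0 with rfl | hs
    · simpa [MulChar.map_zero] using sq_nonneg _
    · refine le_of_eq ?_
      simp only [hS, sum_mul_mulChar_pow_sub_scale χ ψ n hs v]
      rw [mul_pow, mul_pow, ← pow_mul, mul_comm n, pow_mul, mulChar_int_sq_eq_one χ hs, one_pow,
        mul_one]
  have hcard : (0 : ℤ) < Fintype.card F - 1 := by
    have := Fintype.one_lt_card (α := F)
    lia
  refine le_of_mul_le_mul_left ?_ hcard
  calc (Fintype.card F - 1) * S v ^ 2 = ∑ s, ψ s ^ 2 * S v ^ 2 := by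
        rw [← Finset.sum_mul, sum_mulChar_int_sq]
    _ ≤ ∑ s, S (s ^ n * v) ^ 2 := Finset.sum_le_sum fun s _ => hscale s
    _ ≤ n * ∑ t, S (t * v) ^ 2 := sum_comp_pow_le hn fun t => sq_nonneg (S (t * v))
    _ = n * ∑ t, S t ^ 2 := by
        rw [← Equiv.sum_comp (Equiv.mulRight₀ v hv) fun t => S t ^ 2]; rfl
    _ ≤ n * (Fintype.card F * (n * (Fintype.card F - 1))) := by
        gcongr
        exact sum_sq_sum_mul_mulChar_pow_sub_le hχ ψ hn
    _ = _ := by ring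

theorem abs_sum_mul_mulChar_pow_sub_le {χ : MulChar F ℤ} (hχ : χ ≠ 1) (ψ : MulChar F ℤ)
    {n : ℕ} (hn : n ≠ 0) {v : F} (hv : v ≠ 0) :
    |((∑ x, ψ x * χ (x ^ n - v) : ℤ) : ℝ)| ≤ n * √(Fintype.card F) := by
  refine abs_le_of_sq_le_sq ?_ (by positivity)
  rw [mul_pow, Real.sq_sqrt (Nat.cast_nonneg _)]
  exact_mod_cast sq_sum_mul_mulChar_pow_sub_le hχ ψ hn hv

end CharacterSums

section FourthRootShifts

theorem one_le_sum_add_prod_of_card_eq_four {ι : Type*} {s : Finset ι} (hs : s.card = 4)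
    {f : ι → ℤ} (hf : ∀ i ∈ s, f i = 1 ∨ f i = -1) {a b : ι} (ha : a ∈ s) (hb : b ∈ s)
    (hab : a ≠ b) (hfa : f a = 1) (hfb : f b = 1) : 1 ≤ ∑ i ∈ s, f i + ∏ i ∈ s, f i := by
  classical
  have hb' : b ∈ s.erase a := Finset.mem_erase.mpr ⟨hab.symm, hb⟩
  obtain ⟨c, d, hcd, hrest⟩ : ∃ c d, c ≠ d ∧ (s.erase a).erase b = {c, d} :=
    Finset.card_eq_two.mp (by rw [Finset.card_erase_of_mem hb', Finset.card_erase_of_mem ha, hs])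
  have hmem {i : ι} (hi : i ∈ ({c, d} : Finset ι)) : i ∈ s :=
    Finset.mem_of_mem_erase (Finset.mem_of_mem_erase (hrest ▸ hi))
  rw [← Finset.add_sum_erase s f ha, ← Finset.add_sum_erase _ f hb', ← Finset.mul_prod_erase s f ha,
    ← Finset.mul_prod_erase _ f hb', hrest, Finset.sum_pair hcd, Finset.prod_pair hcd, hfa, hfb]
  rcases hf c (hmem (by simp)) with hc | hc <;> rcases hf d (hmem (by simp)) with hd | hd <;>
    simp [hc, hd]

variable {F : Type*} [Field F]

/-- The sum plus the product of the four signs `χ (x - v)`, where `v` runs over the fourth roots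
of unity. If two of the signs are `1`, it is at least `1`; on average it is small. -/
noncomputable def signSum (χ : MulChar F ℤ) (x : F) : ℤ :=
  ∑ v ∈ Polynomial.nthRootsFinset 4 1, χ (x - v) + ∏ v ∈ Polynomial.nthRootsFinset 4 1, χ (x - v)

variable (χ : MulChar F ℤ) {i : F}

theorem signSum_eq (hi : IsPrimitiveRoot i 4) (x : F) :
    signSum χ x = ∑ v ∈ Polynomial.nthRootsFinset 4 1, χ (x - v) + χ (x ^ 4 - 1) := by
  have hfactor := hi.pow_sub_pow_eq_prod_sub_mul x 1 four_pos
  simp only [one_pow, mul_one] at hfactor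
  rw [signSum, hfactor, map_prod]

theorem neg_five_le_signSum (hi : IsPrimitiveRoot i 4) (x : F) : -5 ≤ signSum χ x := by
  have hsum := Finset.card_nsmul_le_sum (Polynomial.nthRootsFinset 4 (1 : F)) (fun v => χ (x - v))
    (-1) fun v _ => neg_one_le_mulChar_int χ (x - v)
  simp only [hi.card_nthRootsFinset, nsmul_eq_mul, Nat.cast_ofNat] at hsum
  rw [signSum_eq χ hi]
  linarith [neg_one_le_mulChar_int χ (x ^ 4 - 1)]

theorem one_le_signSum (hi : IsPrimitiveRoot i 4) {x a b : F} (hx : x ^ 4 ≠ 1) (ha : a ^ 4 = 1)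
    (hb : b ^ 4 = 1) (hab : a ≠ b) (hχa : χ (x - a) = 1) (hχb : χ (x - b) = 1) :
    1 ≤ signSum χ x := by
  refine one_le_sum_add_prod_of_card_eq_four hi.card_nthRootsFinset (fun v hv => ?_)
    ((Polynomial.mem_nthRootsFinset four_pos 1).mpr ha)
    ((Polynomial.mem_nthRootsFinset four_pos 1).mpr hb) hab hχa hχb
  refine mulChar_int_eq_one_or_neg_one χ (sub_ne_zero.mpr ?_)
  rintro rfl
  exact hx ((Polynomial.mem_nthRootsFinset four_pos 1).mp hv)

-- The weight `1 y - χ y` is `2` where `χ y = -1` and `0` elsewhere, and `signSum` is at least `-5`,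
-- so that `12 = 2 * (1 + 5)` pays for the exceptional `y`.
theorem one_sub_mulChar_le_mul_signSum_pow [DecidableEq F] (hi : IsPrimitiveRoot i 4) {m : ℕ}
    (hm : m ≠ 0) {y : F}
    (h : χ y = -1 → (y ^ m) ^ 4 ≠ 1 → 1 ≤ signSum χ (y ^ m)) :
    (1 : MulChar F ℤ) y - χ y ≤
      (1 : MulChar F ℤ) y * signSum χ (y ^ m) - χ y * signSum χ (y ^ m) +
        12 * if y ^ (4 * m) = 1 then 1 else 0 := by
  rcases eq_or_ne y 0 with rfl | hy
  · simp [MulChar.map_zero, hm]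
  rw [MulChar.one_apply (IsUnit.mk0 y hy)]
  rcases mulChar_int_eq_one_or_neg_one χ hy with hχy | hχy
  · rw [hχy]
    split_ifs <;> simp
  · rw [hχy]
    split_ifs with hroot
    · linarith [neg_five_le_signSum χ hi (y ^ m)]
    · rw [mul_comm, pow_mul] at hroot
      linarith [h hχy hroot]

variable [Fintype F] {χ}

theorem abs_sum_mul_signSum_pow_le (hχ : χ ≠ 1) (ψ : MulChar F ℤ) (hi : IsPrimitiveRoot i 4)
    {m : ℕ} (hm : m ≠ 0) :
    |((∑ y, ψ y * signSum χ (y ^ m) : ℤ) : ℝ)| ≤ 8 * m * √(Fintype.card F) := by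
  have hsplit : ∑ y, ψ y * signSum χ (y ^ m) =
      ∑ v ∈ Polynomial.nthRootsFinset 4 1, ∑ y, ψ y * χ (y ^ m - v) +
        ∑ y, ψ y * χ (y ^ (4 * m) - 1) := by
    simp_rw [signSum_eq χ hi, mul_add, Finset.sum_add_distrib, Finset.mul_sum, ← pow_mul,
      mul_comm m]
    rw [Finset.sum_comm]
  have hroots : ∑ v ∈ Polynomial.nthRootsFinset 4 (1 : F),
      |((∑ y, ψ y * χ (y ^ m - v) : ℤ) : ℝ)| ≤ 4 • (m * √(Fintype.card F)) := by
    refine (Finset.sum_le_card_nsmul _ _ _ fun v hv => ?_).trans_eq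
      (by rw [hi.card_nthRootsFinset])
    exact abs_sum_mul_mulChar_pow_sub_le hχ ψ hm
      (Polynomial.ne_zero_of_mem_nthRootsFinset one_ne_zero hv)
  have hone := abs_sum_mul_mulChar_pow_sub_le hχ ψ (mul_ne_zero four_ne_zero hm) (one_ne_zero' F)
  rw [hsplit, Int.cast_add, Int.cast_sum]
  calc _ ≤ _ := (abs_add_le _ _).trans (add_le_add_left (Finset.abs_sum_le_sum_abs _ _) _)
    _ ≤ 4 • (m * √(Fintype.card F)) + (4 * m : ℕ) * √(Fintype.card F) := add_le_add hroots hone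
    _ = 8 * m * √(Fintype.card F) := by push_cast; ring

theorem card_le_of_forall_one_le_signSum (hχ : χ ≠ 1) (hi : IsPrimitiveRoot i 4) {m : ℕ}
    (hm : m ≠ 0) (h : ∀ y, χ y = -1 → (y ^ m) ^ 4 ≠ 1 → 1 ≤ signSum χ (y ^ m)) :
    (Fintype.card F : ℝ) ≤ 16 * m * √(Fintype.card F) + 48 * m + 1 := by
  classical
  have hsum := Finset.sum_le_sum fun y (_ : y ∈ Finset.univ) =>
    one_sub_mulChar_le_mul_signSum_pow χ hi hm (h y)
  simp only [Finset.sum_add_distrib, Finset.sum_sub_distrib, ← Finset.mul_sum, Finset.sum_boole,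
    MulChar.sum_one_eq_card_units, MulChar.sum_eq_zero_of_ne_one hχ] at hsum
  have hcast := (Int.cast_le (R := ℝ)).mpr hsum
  push_cast at hcast
  have hcard : (Fintype.card F : ℝ) = Fintype.card Fˣ + 1 := by
    exact_mod_cast Fintype.card_eq_card_units_add_one (α := F)
  have hexc : (({y | y ^ (4 * m) = 1} : Finset F).card : ℝ) ≤ 4 * m := by
    exact_mod_cast card_filter_pow_eq_le (mul_ne_zero four_ne_zero hm) (1 : F)
  have hone := abs_le.mp (abs_sum_mul_signSum_pow_le hχ 1 hi hm)
  have hself := abs_le.mp (abs_sum_mul_signSum_pow_le hχ χ hi hm)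
  push_cast at hone hself
  linarith [hone.2, hself.1]

end FourthRootShifts

section FourthPowerCover

variable {F : Type*} [Field F]

theorem exists_shift_eq_pow_four_mul (hcover : ∀ x : F, ∃ a d, a ^ 5 = a ∧ a + d ^ 4 = x) {x z : F}
    (hz : z ^ 4 = 1) (hxz : ∀ d, x ≠ d ^ 4 * z) :
    ∃ v d, v ^ 4 = 1 ∧ x - v = d ^ 4 * z := by
  have hz0 : z ≠ 0 := by rintro rfl; simp at hz
  obtain ⟨a, d, ha, had⟩ := hcover (x / z)
  have hx_eq : x = a * z + d ^ 4 * z := by rw [← add_mul, had, div_mul_cancel₀ x hz0]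
  rcases eq_or_ne a 0 with rfl | ha0
  · exact absurd (by simpa using hx_eq) (hxz d)
  · have ha4 : a ^ 4 = 1 := mul_left_cancel₀ ha0 (by rw [← pow_succ', ha, mul_one])
    exact ⟨a * z, d, by rw [mul_pow, ha4, hz, one_mul], by rw [hx_eq, add_sub_cancel_left]⟩

theorem exists_two_square_shifts_of_isSquare_of_not_pow_four
    (hcover : ∀ x : F, ∃ a d, a ^ 5 = a ∧ a + d ^ 4 = x) {z : F} (hz : z ^ 4 = 1)
    (hzsq : IsSquare z) (hz4 : ∀ e, e ^ 4 ≠ z) {x : F} (hxsq : ¬IsSquare x) (hx : x ^ 4 ≠ 1) :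
    ∃ a b, a ^ 4 = 1 ∧ b ^ 4 = 1 ∧ a ≠ b ∧ IsSquare (x - a) ∧ IsSquare (x - b) := by
  have hsq (d : F) : IsSquare (d ^ 4) := ⟨d ^ 2, by ring⟩
  obtain ⟨a, d, ha, had⟩ := exists_shift_eq_pow_four_mul hcover (x := x) (one_pow 4) fun d hd =>
    hxsq (by rw [hd, mul_one]; exact hsq d)
  obtain ⟨b, e, hb, hbe⟩ := exists_shift_eq_pow_four_mul hcover (x := x) hz fun d hd =>
    hxsq (hd ▸ (hsq d).mul hzsq)
  refine ⟨a, b, ha, hb, ?_, by rw [had, mul_one]; exact hsq d, hbe ▸ (hsq e).mul hzsq⟩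
  rintro rfl
  have he : e ≠ 0 := by
    rintro rfl
    exact hx (by rw [sub_eq_zero.mp (hbe.trans (by ring)), ha])
  exact hz4 (d / e) (by rw [div_pow, div_eq_iff (pow_ne_zero 4 he), mul_comm, ← hbe, had, mul_one])

theorem pow_four_ne_sq_of_not_isSquare (hneg : IsSquare (-1 : F)) {y : F} (hy : ¬IsSquare y)
    (d : F) : d ^ 4 ≠ y ^ 2 := fun hd => by
  rcases sq_eq_sq_iff_eq_or_eq_neg.mp (show (d ^ 2) ^ 2 = y ^ 2 by rw [← hd]; ring) with h | h
  · exact hy ⟨d, by rw [← h, sq]⟩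
  · refine hy ?_
    rw [← neg_eq_iff_eq_neg.mpr h, neg_eq_neg_one_mul]
    exact hneg.mul (IsSquare.sq d)

theorem exists_two_square_shifts_of_forall_pow_four
    (hcover : ∀ x : F, ∃ a d, a ^ 5 = a ∧ a + d ^ 4 = x)
    (hroots : ∀ z : F, z ^ 4 = 1 → ∃ e, e ^ 4 = z)
    {y : F} (hysq : ¬IsSquare y) (hy : (y ^ 2) ^ 4 ≠ 1) :
    ∃ a b, a ^ 4 = 1 ∧ b ^ 4 = 1 ∧ a ≠ b ∧ IsSquare (y ^ 2 - a) ∧ IsSquare (y ^ 2 - b) := by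
  have hneg : IsSquare (-1 : F) := by
    obtain ⟨e, he⟩ := hroots (-1) (by ring)
    exact ⟨e ^ 2, by rw [← he]; ring⟩
  have hy0 : y ≠ 0 := by rintro rfl; exact hysq IsSquare.zero
  obtain ⟨a, d, ha, had⟩ := exists_shift_eq_pow_four_mul hcover (x := y ^ 2) (one_pow 4) fun d hd =>
    pow_four_ne_sq_of_not_isSquare hneg hysq d (by rw [hd, mul_one])
  -- The covering property at `1 / y ^ 2` yields a second shift of `y ^ 2`, because `-v⁻¹` is a
  -- fourth power.
  obtain ⟨v, d', hv, hvd⟩ := exists_shift_eq_pow_four_mul hcover (x := y⁻¹ ^ 2) (one_pow 4)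
    fun d hd => pow_four_ne_sq_of_not_isSquare hneg (by rwa [isSquare_inv]) d (by rw [hd, mul_one])
  have hv0 : v ≠ 0 := by rintro rfl; simp at hv
  obtain ⟨e, he⟩ := hroots (-v⁻¹) (by rw [neg_pow, inv_pow, hv]; norm_num)
  have hshift : y ^ 2 - v⁻¹ = y ^ 2 * (e * d') ^ 4 := by
    rw [mul_pow, he, ← mul_one (d' ^ 4), ← hvd]
    field_simp
    ring
  refine ⟨a, v⁻¹, ha, by rw [inv_pow, hv, inv_one], ?_, ⟨d ^ 2, by rw [had]; ring⟩,
    ⟨y * (e * d') ^ 2, by rw [hshift]; ring⟩⟩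
  rintro rfl
  have hed : e * d' ≠ 0 := by
    intro hed
    apply hy
    rw [sub_eq_zero.mp (hshift.trans (by rw [hed]; ring)), ha]
  refine pow_four_ne_sq_of_not_isSquare hneg hysq (d / (e * d')) ?_
  rw [div_pow, div_eq_iff (pow_ne_zero 4 hed), ← hshift, had, mul_one]

theorem exists_isSquare_pow_four_eq_one_of_not_forall_pow_four (hneg : IsSquare (-1 : F))
    (hroots : ¬∀ z : F, z ^ 4 = 1 → ∃ e, e ^ 4 = z) :
    ∃ z : F, z ^ 4 = 1 ∧ IsSquare z ∧ ∀ e, e ^ 4 ≠ z := by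
  push Not at hroots
  obtain ⟨z, hz, hz4⟩ := hroots
  by_cases hzsq : IsSquare z
  · exact ⟨z, hz, hzsq, hz4⟩
  · exact ⟨z ^ 2, by rw [← pow_mul, mul_comm, pow_mul, hz, one_pow], IsSquare.sq z,
      pow_four_ne_sq_of_not_isSquare hneg hzsq⟩

end FourthPowerCover

section FiniteField

variable {F : Type*} [Field F] [Fintype F]

theorem ringChar_ne_two_of_card_mod_four (h4 : Fintype.card F % 4 = 1) : ringChar F ≠ 2 :=
  fun h => by
    have := FiniteField.even_card_iff_char_two.mp h
    lia

theorem exists_pow_four_eq_of_pow_eq_self (h4 : Fintype.card F % 4 = 1) {b : F}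
    (hb : b ^ ((Fintype.card F - 1) / 4 + 1) = b) : ∃ d, d ^ 4 = b := by
  rcases eq_or_ne b 0 with rfl | hb0
  · exact ⟨0, by simp⟩
  have hpow : b ^ ((Fintype.card F - 1) / 4) = 1 :=
    mul_right_cancel₀ hb0 (by rw [← pow_succ, hb, one_mul])
  have isSquare_of {c : F} (hc0 : c ≠ 0) (hc : (c * c) ^ ((Fintype.card F - 1) / 4) = 1) :
      IsSquare c := by
    have hhalf : Fintype.card F / 2 = 2 * ((Fintype.card F - 1) / 4) := by lia
    rwa [FiniteField.isSquare_iff (ringChar_ne_two_of_card_mod_four h4) hc0, hhalf, pow_mul, sq]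
  obtain ⟨c, rfl⟩ := isSquare_of hb0 (by rw [mul_pow, hpow, one_mul])
  obtain ⟨d, rfl⟩ := isSquare_of (left_ne_zero_of_mul hb0) hpow
  exact ⟨d, by ring⟩

theorem exists_isPrimitiveRoot_four (h4 : Fintype.card F % 4 = 1) :
    ∃ i : F, IsPrimitiveRoot i 4 := by
  obtain ⟨i, hi⟩ := FiniteField.isSquare_neg_one_iff.mpr (show Fintype.card F % 4 ≠ 3 by lia)
  have hF : (2 : F) ≠ 0 := Ring.two_ne_zero (ringChar_ne_two_of_card_mod_four h4)
  refine ⟨i, IsPrimitiveRoot.iff_orderOf.mpr (orderOf_eq_prime_pow (p := 2) (n := 1) ?_ ?_)⟩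
  · rw [pow_one, sq, ← hi]
    exact fun h => hF (by linear_combination -h)
  · linear_combination (1 - i * i) * hi

theorem card_le_of_forall_exists_two_square_shifts (h4 : Fintype.card F % 4 = 1) {m : ℕ}
    (hm : m ≠ 0)
    (h : ∀ y : F, ¬IsSquare y → (y ^ m) ^ 4 ≠ 1 → ∃ a b, a ^ 4 = 1 ∧ b ^ 4 = 1 ∧ a ≠ b ∧
      IsSquare (y ^ m - a) ∧ IsSquare (y ^ m - b)) :
    (Fintype.card F : ℝ) ≤ 16 * m * √(Fintype.card F) + 48 * m + 1 := by
  classical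
  obtain ⟨i, hi⟩ := exists_isPrimitiveRoot_four h4
  refine card_le_of_forall_one_le_signSum
    (quadraticChar_ne_one (ringChar_ne_two_of_card_mod_four h4)) hi hm fun y hy hy4 => ?_
  obtain ⟨a, b, ha, hb, hab, hsqa, hsqb⟩ := h y (quadraticChar_neg_one_iff_not_isSquare.mp hy) hy4
  have hne {v : F} (hv : v ^ 4 = 1) : y ^ m - v ≠ 0 := sub_ne_zero.mpr fun h => hy4 (h ▸ hv)
  exact one_le_signSum _ hi hy4 ha hb hab ((quadraticChar_one_iff_isSquare (hne ha)).mpr hsqa)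
    ((quadraticChar_one_iff_isSquare (hne hb)).mpr hsqb)

end FiniteField

theorem not_sum_of_five_potent_and_n_potent_d_eq_four_general {F : Type*} [Field F] [Fintype F]
    (h4 : Fintype.card F % 4 = 1) (hcard : 1225 ≤ Fintype.card F) :
    ¬∀ γ : F, ∃ a b : F, a ^ 5 = a ∧ b ^ ((Fintype.card F - 1) / 4 + 1) = b ∧ a + b = γ := by
  intro hcover
  have hpow (x : F) : ∃ a d, a ^ 5 = a ∧ a + d ^ 4 = x := by
    obtain ⟨a, b, ha, hb, hab⟩ := hcover x
    obtain ⟨d, rfl⟩ := exists_pow_four_eq_of_pow_eq_self h4 hb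
    exact ⟨a, d, ha, hab⟩
  -- The bounds `q ≤ 16√q + 49` and `q ≤ 32√q + 97` obtained below both fail for `√q ≥ 35`.
  have hsqrt : 35 ≤ √(Fintype.card F : ℝ) :=
    Real.le_sqrt_of_sq_le (by norm_num; exact_mod_cast hcard)
  have hsq : √(Fintype.card F : ℝ) ^ 2 = Fintype.card F := Real.sq_sqrt (Nat.cast_nonneg _)
  by_cases hroots : ∀ z : F, z ^ 4 = 1 → ∃ e, e ^ 4 = z
  · have hbound := card_le_of_forall_exists_two_square_shifts h4 two_ne_zero fun y hy hy4 =>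
      exists_two_square_shifts_of_forall_pow_four hpow hroots hy hy4
    push_cast at hbound
    nlinarith
  · have hneg : IsSquare (-1 : F) := FiniteField.isSquare_neg_one_iff.mpr (by lia)
    obtain ⟨z, hz, hzsq, hz4⟩ :=
      exists_isSquare_pow_four_eq_one_of_not_forall_pow_four hneg hroots
    have hbound := card_le_of_forall_exists_two_square_shifts h4 one_ne_zero fun y hy hy4 => by
      rw [pow_one] at hy4 ⊢
      exact exists_two_square_shifts_of_isSquare_of_not_pow_four hpow hz hzsq hz4 hy hy4
    push_cast at hbound
    nlinarith

/-- If `q ≡ 1 (mod 4)` is a prime power with `q > 2809` and `n - 1 = (q-1)/4`, then not every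
element of the finite field with `q` elements is the sum of a `5`-potent and an
`n`-potent. -/
theorem not_sum_of_five_potent_and_n_potent_d_eq_four
    (q n : ℕ) (hq : IsPrimePow q) (hq4 : q % 4 = 1) (hq' : 2809 < q)
    (hn : n = (q - 1) / 4 + 1)
    (F : Type*) [Field F] [Fintype F] (hF : Fintype.card F = q) :
    ¬ (∀ γ : F, ∃ a b : F, a ^ 5 = a ∧ b ^ n = b ∧ a + b = γ) := by
  subst hn hF
  exact not_sum_of_five_potent_and_n_potent_d_eq_four_general hq4 (by lia)
end
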